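/- Fix π̃ ∈ Π̃. If there exists a probability measure Q ≪ P_0 on Ω_0 which is invariant for the environment Markov kernel R_{π̃}, then Q is equivalent to P_0 (mutually absolutely continuous), the environment Markov chain with initial law Q and transition kernel R_{π̃} is stationary and ergodic, and Q is the unique R_{π̃}-invariant probability measure absolutely continuous with respect to P_0. -/

import Mathlib

open MeasureTheory ProbabilityTheory Filter Topology
open scoped ENNReal NNReal BigOperators

noncomputable section

namespace SRWPC

/-- Vertices of the lattice `ℤ^d`. -/
abbrev V (d : ℕ) := Fin d → ℤ

/-- Index of a nearest-neighbour bond: the bond from `x` to `x + eᵢ`. -/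
abbrev EdgeIx (d : ℕ) := V d × Fin d

/-- Percolation configurations `Ω = {0,1}^{𝔹_d}`. -/
abbrev Config (d : ℕ) := EdgeIx d → Bool

/-- The `i`-th coordinate unit vector. -/
def unitVec (d : ℕ) (i : Fin d) : V d := fun j => if j = i then 1 else 0

/-- The set `𝕌_d` of the `2d` unit vectors. -/
def Ud (d : ℕ) : Finset (V d) :=
  (Finset.univ.image (unitVec d)) ∪ (Finset.univ.image (fun i => -unitVec d i))

/-- The type of nearest-neighbour steps (elements of `𝕌_d`). -/
abbrev Step (d : ℕ) := {e : V d // e ∈ Ud d}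

/-- The shift `(τ_x ω)_b = ω_{x+b}`. -/
def shift {d : ℕ} (x : V d) (ω : Config d) : Config d := fun b => ω (b.1 + x, b.2)

/-- The bond from `x` to `x + e` is open in `ω`. -/
def edgeOpen {d : ℕ} (ω : Config d) (x e : V d) : Prop :=
  ∃ i : Fin d, (e = unitVec d i ∧ ω (x, i) = true) ∨
    (e = -unitVec d i ∧ ω (x - unitVec d i, i) = true)

open Classical in
/-- The number of open bonds incident to `x`. -/
def openDeg {d : ℕ} (ω : Config d) (x : V d) : ℕ :=
  ((Ud d).filter (fun e => edgeOpen ω x e)).card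

open Classical in
/-- The transition probability `π_ω(x,e)` of the simple random walk on the cluster. -/
def trans {d : ℕ} (ω : Config d) (x e : V d) : ℝ :=
  if edgeOpen ω x e then 1 / openDeg ω x else 0

/-- `γ` restricted to `{0,…,n}` is a nearest-neighbour open path in `ω`. -/
def IsOpenPath {d : ℕ} (ω : Config d) (γ : ℕ → V d) (n : ℕ) : Prop :=
  ∀ k < n, (γ (k + 1) - γ k) ∈ Ud d ∧ edgeOpen ω (γ k) (γ (k + 1) - γ k)

/-- `x` lies in the box `[-r,r]^d`. -/
def inBox {d : ℕ} (x : V d) (r : ℝ) : Prop := ∀ i, |(x i : ℝ)| ≤ r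

/-- `x` is joined to infinity by a nearest-neighbour open path, i.e. `x ∈ 𝒞_∞(ω)`. -/
def memCluster {d : ℕ} (ω : Config d) (x : V d) : Prop :=
  ∀ R : ℕ, ∃ (γ : ℕ → V d) (n : ℕ), γ 0 = x ∧ IsOpenPath ω γ n ∧ ¬ inBox (γ n) R

/-- The event `Ω_0 = {0 ∈ 𝒞_∞}`. -/
def cluZero (d : ℕ) : Set (Config d) := {ω | memCluster ω 0}

/-- `P` is the Bernoulli bond percolation product measure with parameter `q`. -/
def IsBernoulli (d : ℕ) (q : ℝ) (P : Measure (Config d)) : Prop :=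
  IsProbabilityMeasure P ∧
    ∀ (F : Finset (EdgeIx d)) (a : EdgeIx d → Bool),
      P {ω | ∀ b ∈ F, ω b = a b} = ∏ b ∈ F, ENNReal.ofReal (if a b then q else 1 - q)

/-- The critical probability `p_c(d)` of bond percolation on `ℤ^d`. -/
def pc (d : ℕ) : ℝ :=
  sInf {q : ℝ | q ∈ Set.Icc (0 : ℝ) 1 ∧
    ∀ P : Measure (Config d), IsBernoulli d q P → 0 < P (cluZero d)}

variable {d : ℕ}

/-- Position of the walk after `k` steps, given the sequence of steps `s`. -/
def pos {n : ℕ} (s : Fin n → Step d) (k : ℕ) : V d :=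
  ∑ j ∈ Finset.univ.filter (fun j : Fin n => (j : ℕ) < k), (s j).1

/-- The environment/step pair `(τ_{X_k} ω, X_{k+1} - X_k)` seen at time `k`. -/
def envPair (ω : Config d) {n : ℕ} (s : Fin n → Step d) (k : Fin n) : Config d × Step d :=
  (shift (pos s k) ω, s k)

/-- Quenched probability of a given sequence of `n` steps under the Markov kernel `κ`. -/
def pathProb (κ : Config d → Step d → ℝ) (ω : Config d) {n : ℕ} (s : Fin n → Step d) : ℝ :=
  ∏ k : Fin n, κ (shift (pos s k) ω) (s k)

/-- The SRWPC transition kernel `π`. -/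
def srw (d : ℕ) : Config d → Step d → ℝ := fun ω e => trans ω 0 e.1

/-- Quenched expectation (under `P_0^{κ,ω}`) of a functional of the first `n` steps. -/
def qE (κ : Config d → Step d → ℝ) (ω : Config d) {n : ℕ} (F : (Fin n → Step d) → ℝ) : ℝ :=
  ∑ s : Fin n → Step d, pathProb κ ω s * F s

/-- Quenched probability (under `P_0^{κ,ω}`) of a set of `n`-step trajectories. -/
def qP (κ : Config d → Step d → ℝ) (ω : Config d) {n : ℕ} (A : Set (Fin n → Step d)) : ℝ :=
  ∑ s : Fin n → Step d, A.indicator (fun s' => pathProb κ ω s') s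

/-- Quenched probability, `ℝ≥0∞`-valued. -/
def qPE (κ : Config d → Step d → ℝ) (ω : Config d) {n : ℕ} (A : Set (Fin n → Step d)) : ℝ≥0∞ :=
  ENNReal.ofReal (qP κ ω A)

/-- The environment-step space `Ω_0 × 𝕌_d`. -/
abbrev EnvSp (d : ℕ) := Config d × Step d

/-- The pair empirical measure `ℒ_n` as a measure. -/
def empMeas (ω : Config d) {n : ℕ} (s : Fin n → Step d) : Measure (EnvSp d) :=
  (n : ℝ≥0∞)⁻¹ • ∑ k : Fin n, Measure.dirac (envPair ω s k)

lemma empMeas_isProb (ω : Config d) {n : ℕ} (hn : n ≠ 0) (s : Fin n → Step d) :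
    IsProbabilityMeasure (empMeas ω s) := by
  constructor
  simp only [empMeas, Measure.smul_apply, Measure.coe_finset_sum, Finset.sum_apply,
    Measure.dirac_apply_of_mem (Set.mem_univ _), smul_eq_mul]
  rw [Finset.sum_const, Finset.card_univ, Fintype.card_fin, nsmul_eq_mul, mul_one,
    ENNReal.inv_mul_cancel]
  · exact_mod_cast hn
  · exact ENNReal.natCast_ne_top n

/-- The pair empirical measure `ℒ_{n+1}` as a probability measure. -/
def empPM (ω : Config d) {n : ℕ} (s : Fin (n + 1) → Step d) : ProbabilityMeasure (EnvSp d) :=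
  ⟨empMeas ω s, empMeas_isProb ω (Nat.succ_ne_zero n) s⟩

/-- First marginal `(μ)_1` of a measure on `Ω_0 × 𝕌_d`. -/
def marg1 (μ : Measure (EnvSp d)) : Measure (Config d) := μ.map Prod.fst

/-- Second marginal `(μ)_2` of a measure on `Ω_0 × 𝕌_d`. -/
def marg2 (μ : Measure (EnvSp d)) : Measure (Config d) := μ.map (fun q => shift q.2.1 q.1)

/-- The slice `dμ(·, e)` of a measure on `Ω_0 × 𝕌_d` at a fixed step `e`. -/
def slice (μ : Measure (EnvSp d)) (e : Step d) : Measure (Config d) :=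
  (μ.restrict (Set.univ ×ˢ {e})).map Prod.fst

/-- The space `ℳ_1⋆`: probability measures on `Ω_0 × 𝕌_d` whose two marginals coincide and
are absolutely continuous w.r.t. `P₀`, and whose densities `dμ(ω,e)/d(μ)_1(ω)` are positive
precisely on open edges, `P₀`-a.s. -/
def M1star (d : ℕ) (P₀ : Measure (Config d)) : Set (ProbabilityMeasure (EnvSp d)) :=
  {μ | marg1 μ.toMeasure = marg2 μ.toMeasure ∧ marg1 μ.toMeasure ≪ P₀ ∧
    ∃ ρ : Step d → Config d → ℝ≥0∞, (∀ e, Measurable (ρ e)) ∧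
      (∀ e, slice μ.toMeasure e = (marg1 μ.toMeasure).withDensity (ρ e)) ∧
      (∀ e : Step d, ∀ᵐ ω ∂P₀, (0 < ρ e ω ↔ edgeOpen ω 0 e.1))}

/-- The reference measure `π_ω(0,e) d(μ)_1(ω)` on `Ω_0 × 𝕌_d`. -/
def refM (μ : Measure (EnvSp d)) : Measure (EnvSp d) :=
  Measure.sum (fun e : Step d =>
    ((marg1 μ).withDensity (fun ω => ENNReal.ofReal (trans ω 0 e.1))).map (fun ω => (ω, e)))

/-- `x log x - x + 1`. -/
def klFun (x : ℝ) : ℝ := x * Real.log x - x + 1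

open Classical in
/-- The entropy functional `ℑ` (a relative entropy with respect to `refM μ`;
it equals `∫ Σ_e dμ(ω,e) log[dμ(ω,e) / (d(μ)_1(ω) π_ω(0,e))]` on `ℳ_1⋆` and `∞` otherwise). -/
def entI (P₀ : Measure (Config d)) (μ : ProbabilityMeasure (EnvSp d)) : ℝ≥0∞ :=
  if μ ∈ M1star d P₀ ∧ μ.toMeasure ≪ refM μ.toMeasure then
    ∫⁻ q, ENNReal.ofReal (klFun ((μ.toMeasure.rnDeriv (refM μ.toMeasure)) q).toReal)
      ∂(refM μ.toMeasure)
  else ∞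

/-- The pairing `⟨f, μ⟩`. -/
def pairing (f : EnvSp d → ℝ) (μ : ProbabilityMeasure (EnvSp d)) : ℝ :=
  ∫ q, f q ∂μ.toMeasure

/-- The Fenchel–Legendre transform `ℑ⋆` of `ℑ`. -/
def entIstar (P₀ : Measure (Config d)) (f : BoundedContinuousFunction (EnvSp d) ℝ) : EReal :=
  ⨆ μ : ProbabilityMeasure (EnvSp d),
    ((pairing f μ : ℝ) : EReal) - ((entI P₀ μ : ℝ≥0∞) : EReal)

/-- The double Fenchel–Legendre transform `ℑ⋆⋆` of `ℑ`. -/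
def entIbis (P₀ : Measure (Config d)) (μ : ProbabilityMeasure (EnvSp d)) : EReal :=
  ⨆ f : BoundedContinuousFunction (EnvSp d) ℝ,
    ((pairing f μ : ℝ) : EReal) - entIstar P₀ f

/-- The contraction map `ξ(μ) = ∫ Σ_e e dμ(ω,e)`. -/
def xi (μ : ProbabilityMeasure (EnvSp d)) : Fin d → ℝ :=
  fun i => ∫ q, ((q.2.1 i : ℤ) : ℝ) ∂μ.toMeasure

/-- The mean velocity `X_n / n` of a trajectory. -/
def meanVel {n : ℕ} (s : Fin n → Step d) : Fin d → ℝ :=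
  fun i => (n : ℝ)⁻¹ * ((pos s n) i : ℝ)

/-- The class `Π̃` of environment transition kernels. -/
def PiT (d : ℕ) (P₀ : Measure (Config d)) : Set (Config d → Step d → ℝ) :=
  {κ | (∀ e : Step d, Measurable (fun ω => κ ω e)) ∧
    (∀ ω e, 0 ≤ κ ω e) ∧ (∀ e : Step d, ∀ᵐ ω ∂P₀, κ ω e ≤ 1) ∧
    (∀ᵐ ω ∂P₀, ∑ e : Step d, κ ω e = 1) ∧
    (∀ e : Step d, ∀ᵐ ω ∂P₀, (κ ω e = 0 ↔ trans ω 0 e.1 = 0))}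

/-- `φ dP₀` is an invariant probability density for the kernel `κ`. -/
def IsInvDensity (P₀ : Measure (Config d)) (κ : Config d → Step d → ℝ)
    (φ : Config d → ℝ) : Prop :=
  Measurable φ ∧ (∀ ω, 0 ≤ φ ω) ∧ (∫ ω, φ ω ∂P₀) = 1 ∧
    (∀ᵐ ω ∂P₀, φ ω = ∑ e : Step d, κ (shift (-e.1) ω) e * φ (shift (-e.1) ω))

/-- The set `ℰ` of pairs `(π̃, φ)`. -/
def Epairs (d : ℕ) (P₀ : Measure (Config d)) :
    Set ((Config d → Step d → ℝ) × (Config d → ℝ)) :=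
  {q | q.1 ∈ PiT d P₀ ∧ IsInvDensity P₀ q.1 q.2}

/-- The measure `dμ(ω,e) = π̃(ω,e) φ(ω) dP₀(ω)` associated with a pair `(π̃, φ)`. -/
def pairMeasure (P₀ : Measure (Config d)) (κ : Config d → Step d → ℝ)
    (φ : Config d → ℝ) : Measure (EnvSp d) :=
  Measure.sum (fun e : Step d =>
    (P₀.withDensity (fun ω => ENNReal.ofReal (κ ω e * φ ω))).map (fun ω => (ω, e)))

/-- The kernel `dμ/d(μ)_1` associated with a measure on `Ω_0 × 𝕌_d`. -/
def toKappa (μ : Measure (EnvSp d)) : Config d → Step d → ℝ :=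
  fun ω e => ((slice μ e).rnDeriv (marg1 μ) ω).toReal

/-- The density `d(μ)_1/dP₀` associated with a measure on `Ω_0 × 𝕌_d`. -/
def toPhi (P₀ : Measure (Config d)) (μ : Measure (EnvSp d)) : Config d → ℝ :=
  fun ω => ((marg1 μ).rnDeriv P₀ ω).toReal

/-- The environment Markov transition operator `R_κ`. -/
def kernelStep (κ : Config d → Step d → ℝ) (f : Config d → ℝ) : Config d → ℝ :=
  fun ω => ∑ e : Step d, κ ω e * f (shift e.1 ω)

/-- `Q` is an invariant measure for the environment kernel `R_κ`. -/
def IsInvariant (κ : Config d → Step d → ℝ) (Q : Measure (Config d)) : Prop :=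
  ∀ f : Config d → ℝ, Measurable f → (∃ C, ∀ ω, |f ω| ≤ C) →
    ∫ ω, kernelStep κ f ω ∂Q = ∫ ω, f ω ∂Q

/-- Partial sum `Σ_{k<m} f(τ_{X_k}ω, X_{k+1}-X_k)` along a trajectory of length `N`. -/
def partialSumF (f : EnvSp d → ℝ) (ω : Config d) {N : ℕ} (s : Fin N → Step d) (m : ℕ) : ℝ :=
  ∑ k ∈ Finset.univ.filter (fun k : Fin N => (k : ℕ) < m), f (envPair ω s k)

/-- The sum of `G` along the path `γ` up to time `n`. -/
def pathSum (G : Config d → V d → ℝ) (ω : Config d) (γ : ℕ → V d) (n : ℕ) : ℝ :=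
  ∑ k ∈ Finset.range n, G (shift (γ k) ω) (γ (k + 1) - γ k)

/-- The class `𝒢_∞` of gradients: zero mean, uniformly bounded, closed loops. -/
def Ginfty (d : ℕ) (P₀ : Measure (Config d)) : Set (Config d → V d → ℝ) :=
  {G | (∀ e ∈ Ud d, Measurable (fun ω => G ω e)) ∧
    (∀ e ∈ Ud d, ∫ ω, G ω e ∂P₀ = 0) ∧
    (∃ M : ℝ, ∀ e ∈ Ud d, ∀ᵐ ω ∂P₀, |G ω e| ≤ M) ∧
    (∀ᵐ ω ∂P₀, ∀ (γ : ℕ → V d) (n : ℕ),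
      memCluster ω (γ 0) → IsOpenPath ω γ n → γ n = γ 0 → pathSum G ω γ n = 0)}

open Classical in
/-- The corrector `Ψ(ω,x)`: the sum of `G` along some open path from `0` to `x`. -/
def corr (G : Config d → V d → ℝ) (ω : Config d) (x : V d) : ℝ :=
  if h : ∃ q : (ℕ → V d) × ℕ, q.1 0 = 0 ∧ q.1 q.2 = x ∧ IsOpenPath ω q.1 q.2
  then pathSum G ω h.choose.1 h.choose.2 else 0

/-- The chemical distance: minimal length of an open path joining `x` and `y`. -/
def chemDist (ω : Config d) (x y : V d) : ℕ :=
  sInf {n : ℕ | ∃ γ : ℕ → V d, γ 0 = x ∧ γ n = y ∧ IsOpenPath ω γ n}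

open Classical in
/-- The functional `Λ(f,G)`. -/
def Lam (P₀ : Measure (Config d)) (f : EnvSp d → ℝ) (G : Config d → V d → ℝ) : EReal :=
  essSup (fun ω => ((Real.log (∑ e : Step d,
    if edgeOpen ω 0 e.1 then trans ω 0 e.1 * Real.exp (f (ω, e) + G ω e.1) else 0)) : EReal)) P₀

/-- The variational formula `H̄(f) = sup_{μ ∈ ℳ_1⋆} {⟨f,μ⟩ - ℑ(μ)}`. -/
def Hbar (P₀ : Measure (Config d)) (f : EnvSp d → ℝ) : EReal :=
  ⨆ μ ∈ M1star d P₀, ((pairing f μ : ℝ) : EReal) - ((entI P₀ μ : ℝ≥0∞) : EReal)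

/-- The finite σ-algebra `𝓑_k` recording all bonds in the box of size `k` around the origin. -/
def Bsig (d k : ℕ) : MeasurableSpace (Config d) :=
  MeasurableSpace.comap
    (fun (ω : Config d) (b : {b : EdgeIx d // ∀ i, |b.1 i| ≤ (k : ℤ)}) => ω b.1) inferInstance

end SRWPC

/-!
The environment chain cannot leave the set where the density of an invariant `Q ≪ P₀` is positive,
and a set that it cannot leave has `P₀`-measure `0` or `1`: as the infinite cluster is unique, the
event that such a set is seen from some vertex of that cluster is translation invariant, and the
product measure is ergodic under translations.

For the uniqueness of the infinite cluster, let `W` be the boundary of a box with bond set `B`, and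
reveal the open clusters that meet `W`. A bond between two of them is closed; it is counted twice
when the centred states of the bonds at each cluster are added up cluster by cluster, but once when
they are added up over all revealed bonds. Both sums are stopped martingales, and their exponentials
show that the expected number `N` of such bonds satisfies `δ p N ≤ 6 δ² |B| + |W| + 1`. Dividing by
the volume of the box, which then grows, and letting `δ → 0` afterwards, we see that almost surely
no bond joins two distinct infinite clusters. Opening single bonds extends this to all pairs of
vertices.
-/

namespace SRWPC

section InvariantMeasures

variable {Ω : Type*} [MeasurableSpace Ω] {K : Kernel Ω Ω} {μ Q Q' : Measure Ω}

/-- `K` is indecomposable with respect to `μ` if `μ` does not split into two nonzero parts, one of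
which `K` cannot leave. Unlike ergodicity, this does not ask `μ` to be invariant. -/
def IsIndecomposable (K : Kernel Ω Ω) (μ : Measure Ω) : Prop :=
  ∀ D : Set Ω, MeasurableSet D → (∀ᵐ ω ∂μ, ω ∈ D → K ω Dᶜ = 0) → μ D = 0 ∨ μ Dᶜ = 0

lemma IsIndecomposable.absolutelyContinuous_of_invariant (hK : IsIndecomposable K μ) [SigmaFinite μ]
    [SigmaFinite Q] (hQ : Q ≠ 0) (hQμ : Q ≪ μ) (hinv : Kernel.Invariant K Q) : μ ≪ Q := by
  let D : Set Ω := {ω | Q.rnDeriv μ ω ≠ 0}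
  have hDm : MeasurableSet D := (Measure.measurable_rnDeriv Q μ) (measurableSet_singleton 0).compl
  have hφ : μ.withDensity (Q.rnDeriv μ) = Q := Measure.withDensity_rnDeriv_eq Q μ hQμ
  have hQD : Q Dᶜ = 0 := by
    nth_rw 1 [← hφ]
    rw [withDensity_apply _ hDm.compl, setLIntegral_eq_zero_iff hDm.compl
      (Measure.measurable_rnDeriv Q μ)]
    exact ae_of_all _ fun ω hω => not_not.mp hω
  have habs : ∀ᵐ ω ∂Q, K ω Dᶜ = 0 := by
    rw [← hinv.def, Measure.bind_apply hDm.compl K.aemeasurable] at hQD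
    exact (lintegral_eq_zero_iff (K.measurable_coe hDm.compl)).1 hQD
  rw [← hφ, ae_withDensity_iff (Measure.measurable_rnDeriv Q μ)] at habs
  have hμD : μ D ≠ 0 := fun h => hQ <| by
    rw [← Measure.measure_univ_eq_zero, ← Set.union_compl_self D]
    exact measure_union_null (hQμ h) hQD
  have hμDc : ∀ᵐ ω ∂μ, Q.rnDeriv μ ω ≠ 0 := (hK D hDm habs).resolve_left hμD
  exact hφ ▸ withDensity_absolutelyContinuous' (Measure.measurable_rnDeriv Q μ).aemeasurable hμDc

lemma bind_mono {m m' : Measure Ω} (h : m ≤ m') : m.bind K ≤ m'.bind K :=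
  Measure.le_intro fun s hs _ => by
    rw [Measure.bind_apply hs K.aemeasurable, Measure.bind_apply hs K.aemeasurable]
    exact lintegral_mono' h le_rfl

lemma bind_apply_univ (hK : ∀ᵐ ω ∂Q, K ω Set.univ = 1) : Q.bind K Set.univ = Q Set.univ := by
  rw [Measure.bind_apply .univ K.aemeasurable, lintegral_congr_ae hK, lintegral_one]

lemma invariant_inf [IsFiniteMeasure Q] (hK : ∀ᵐ ω ∂Q, K ω Set.univ = 1)
    (hQ : Kernel.Invariant K Q) (hQ' : Kernel.Invariant K Q') : Kernel.Invariant K (Q ⊓ Q') := by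
  have hle : (Q ⊓ Q').bind K ≤ Q ⊓ Q' :=
    le_inf ((bind_mono inf_le_left).trans_eq hQ.def) ((bind_mono inf_le_right).trans_eq hQ'.def)
  have : IsFiniteMeasure (Q ⊓ Q') := isFiniteMeasure_of_le Q inf_le_left
  have : IsFiniteMeasure ((Q ⊓ Q').bind K) := isFiniteMeasure_of_le (Q ⊓ Q') hle
  exact Measure.eq_of_le_of_measure_univ_eq hle
    (bind_apply_univ (ae_mono inf_le_left hK))

lemma invariant_sub {m : Measure Ω} [IsFiniteMeasure m] (hm : Kernel.Invariant K m)
    (hQ : Kernel.Invariant K Q) (hle : m ≤ Q) : Kernel.Invariant K (Q - m) := by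
  have h : (Q - m).bind K + m = Q :=
    calc (Q - m).bind K + m = (Q - m).bind K + m.bind K := by rw [hm.def]
      _ = (Q - m + m).bind K := Measure.comp_add.symm
      _ = Q := by rw [Measure.sub_add_cancel_of_le hle, hQ.def]
  calc (Q - m).bind K = (Q - m).bind K + m - m := Measure.add_sub_cancel.symm
    _ = Q - m := by rw [h]

lemma mutuallySingular_sub_inf [IsFiniteMeasure Q] :
    (Q - Q ⊓ Q') ⟂ₘ (Q' - Q ⊓ Q') := by
  have : IsFiniteMeasure (Q ⊓ Q') := isFiniteMeasure_of_le Q inf_le_left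
  refine Measure.mutuallySingular_of_disjoint fun r hr hr' => ?_
  have hle : r + Q ⊓ Q' ≤ 0 + Q ⊓ Q' := by
    rw [zero_add]
    refine le_inf ?_ ?_
    · calc r + Q ⊓ Q' ≤ Q - Q ⊓ Q' + Q ⊓ Q' := by gcongr
        _ = Q := Measure.sub_add_cancel_of_le inf_le_left
    · calc r + Q ⊓ Q' ≤ Q' - Q ⊓ Q' + Q ⊓ Q' := by gcongr
        _ = Q' := Measure.sub_add_cancel_of_le inf_le_right
  calc r = r + Q ⊓ Q' - Q ⊓ Q' := Measure.add_sub_cancel.symm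
    _ ≤ ⊥ := Measure.sub_le_of_le_add hle

-- Otherwise `Q - Q ⊓ Q'` and `Q' - Q ⊓ Q'` are nonzero and invariant, so both dominate `μ`,
-- although they are mutually singular.
theorem IsIndecomposable.eq_of_invariant [SigmaFinite μ] (hK : IsIndecomposable K μ)
    (hK1 : ∀ᵐ ω ∂μ, K ω Set.univ = 1) [IsProbabilityMeasure Q] [IsProbabilityMeasure Q']
    (hQμ : Q ≪ μ) (hQ'μ : Q' ≪ μ) (hQ : Kernel.Invariant K Q) (hQ' : Kernel.Invariant K Q') :
    Q = Q' := by
  have : IsFiniteMeasure (Q ⊓ Q') := isFiniteMeasure_of_le Q inf_le_left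
  have : IsFiniteMeasure (Q - Q ⊓ Q') := isFiniteMeasure_of_le Q Measure.sub_le
  have : IsFiniteMeasure (Q' - Q ⊓ Q') := isFiniteMeasure_of_le Q' Measure.sub_le
  have hinf : Kernel.Invariant K (Q ⊓ Q') := invariant_inf (hQμ.ae_le hK1) hQ hQ'
  have hle_of_sub {R : Measure Ω} (hR : Q ⊓ Q' ≤ R) (h : R - Q ⊓ Q' = 0) : R = Q ⊓ Q' := by
    rw [← Measure.sub_add_cancel_of_le hR, h, zero_add]
  by_cases h0 : Q - Q ⊓ Q' = 0
  · exact Measure.eq_of_le_of_isProbabilityMeasure (inf_eq_left.1 (hle_of_sub inf_le_left h0).symm)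
  by_cases h0' : Q' - Q ⊓ Q' = 0
  · exact (Measure.eq_of_le_of_isProbabilityMeasure
      (inf_eq_right.1 (hle_of_sub inf_le_right h0').symm)).symm
  have hac : μ ≪ Q - Q ⊓ Q' := hK.absolutelyContinuous_of_invariant h0
    ((Measure.absolutelyContinuous_of_le Measure.sub_le).trans hQμ)
    (invariant_sub hinf hQ inf_le_left)
  have hac' : μ ≪ Q' - Q ⊓ Q' := hK.absolutelyContinuous_of_invariant h0'
    ((Measure.absolutelyContinuous_of_le Measure.sub_le).trans hQ'μ)
    (invariant_sub hinf hQ' inf_le_right)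
  have hμ : μ = 0 :=
    (Measure.MutuallySingular.self_iff μ).1 (mutuallySingular_sub_inf.mono_ac hac hac')
  exact absurd (Measure.absolutelyContinuous_zero_iff.1 (hμ ▸ hQμ)) (IsProbabilityMeasure.ne_zero Q)

lemma IsIndecomposable.measure_eq_zero_or_one (hK : IsIndecomposable K μ)
    [IsProbabilityMeasure Q] (hQμ : Q ≪ μ) (hμQ : μ ≪ Q) {D : Set Ω} (hD : MeasurableSet D)
    (h : ∀ᵐ ω ∂Q, ω ∈ D → K ω Dᶜ = 0) : Q D = 0 ∨ Q D = 1 :=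
  (hK D hD (hμQ.ae_le h)).imp (fun h => hQμ h) fun h => (prob_compl_eq_zero_iff hD).1 (hQμ h)

end InvariantMeasures

section OptionalStopping

variable {ι α R : Type*}

/-- A random finite set of coordinates is a stopping set if it is determined by the values of the
coordinates it contains. -/
def IsStoppingSet (S : (ι → α) → Finset ι) : Prop :=
  ∀ ω ω' : ι → α, (∀ b ∈ S ω, ω b = ω' b) → S ω' = S ω

lemma sum_le_card_mul_add_prod (T : Finset ι) {t : ι → ℝ} {δ : ℝ} (hδ : δ ≤ 1 / 2)
    (ht : ∀ b ∈ T, |t b| ≤ δ) :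
    ∑ b ∈ T, t b ≤ 2 * δ ^ 2 * T.card + ∏ b ∈ T, (1 + t b) := by
  have hexp : ∀ b ∈ T, Real.exp (t b - 2 * δ ^ 2) ≤ 1 + t b := by
    intro b hb
    have hle := abs_le.1 (ht b hb)
    have hsq : t b ^ 2 ≤ δ ^ 2 := sq_le_sq' hle.1 hle.2
    have hpos : 0 < 1 + t b := by linarith
    rw [← Real.le_log_iff_exp_le hpos]
    calc t b - 2 * δ ^ 2 ≤ t b / (1 + t b) := by
          rw [le_div_iff₀ hpos]
          nlinarith [mul_nonneg (sq_nonneg δ) (by linarith : 0 ≤ 1 / 2 + t b)]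
      _ = 1 - (1 + t b)⁻¹ := by field_simp; ring
      _ ≤ Real.log (1 + t b) := Real.one_sub_inv_le_log_of_pos hpos
  have hprod : Real.exp (∑ b ∈ T, t b - 2 * δ ^ 2 * T.card) ≤ ∏ b ∈ T, (1 + t b) := by
    calc Real.exp (∑ b ∈ T, t b - 2 * δ ^ 2 * T.card)
        = ∏ b ∈ T, Real.exp (t b - 2 * δ ^ 2) := by
          rw [← Real.exp_sum, Finset.sum_sub_distrib, Finset.sum_const, nsmul_eq_mul, mul_comm]
      _ ≤ ∏ b ∈ T, (1 + t b) := Finset.prod_le_prod (fun b _ => (Real.exp_pos _).le) hexp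
  linarith [Real.add_one_le_exp (∑ b ∈ T, t b - 2 * δ ^ 2 * T.card)]

variable [DecidableEq ι]

/-- Swap two configurations on the coordinates outside `S`, evaluated at the first one. If `S` is a
stopping set, this is an involution that preserves product measures. -/
def swapOff (S : (ι → α) → Finset ι) (z : (ι → α) × (ι → α)) : (ι → α) × (ι → α) :=
  ((S z.1).piecewise z.1 z.2, (S z.1).piecewise z.2 z.1)

lemma IsStoppingSet.swapOff_involutive {S : (ι → α) → Finset ι} (hS : IsStoppingSet S) :
    Function.Involutive (swapOff S) := by
  rintro ⟨ω, ω'⟩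
  have h : S ((S ω).piecewise ω ω') = S ω :=
    hS _ _ fun b hb => (Finset.piecewise_eq_of_mem _ _ _ hb).symm
  ext b <;> by_cases hb : b ∈ S ω <;> simp [swapOff, h, hb]

variable [Fintype ι] [Fintype α] [CommSemiring R]

lemma sum_prod_eq_one {u : ι → α → R} (hu : ∀ b, ∑ a, u b a = 1) :
    ∑ ω : ι → α, ∏ b, u b (ω b) = 1 := by
  simp only [← Fintype.prod_sum, hu, Finset.prod_const_one]

theorem IsStoppingSet.sum_prod_ite_eq_one {S : (ι → α) → Finset ι} (hS : IsStoppingSet S)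
    {u v : ι → α → R} (hu : ∀ b, ∑ a, u b a = 1) (hv : ∀ b, ∑ a, v b a = 1) :
    ∑ ω : ι → α, ∏ b, (if b ∈ S ω then u b (ω b) else v b (ω b)) = 1 := by
  let F : (ι → α) × (ι → α) → R := fun z => (∏ b, u b (z.1 b)) * ∏ b, v b (z.2 b)
  have hF : ∀ ω ω', F (swapOff S (ω, ω')) = (∏ b, if b ∈ S ω then u b (ω b) else v b (ω b)) *
      ∏ b, (if b ∈ S ω then v b else u b) (ω' b) := by
    intro ω ω'
    simp only [F, swapOff, ← Finset.prod_mul_distrib]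
    refine Finset.prod_congr rfl fun b _ => ?_
    by_cases hb : b ∈ S ω <;> simp [hb, mul_comm]
  have hsum : ∀ ω, ∑ ω' : ι → α, ∏ b, (if b ∈ S ω then v b else u b) (ω' b) = 1 := fun ω =>
    sum_prod_eq_one fun b => by by_cases hb : b ∈ S ω <;> simp [hb, hu, hv]
  calc ∑ ω : ι → α, ∏ b, (if b ∈ S ω then u b (ω b) else v b (ω b))
      = ∑ ω, ∑ ω', F (swapOff S (ω, ω')) := by
        simp_rw [hF, ← Finset.mul_sum, hsum, mul_one]
    _ = ∑ z, F (swapOff S z) := by rw [Fintype.sum_prod_type]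
    _ = ∑ z, F z := Equiv.sum_comp hS.swapOff_involutive.toPerm F
    _ = 1 := by
        rw [Fintype.sum_prod_type]
        simp only [F, ← Finset.mul_sum, sum_prod_eq_one hv, sum_prod_eq_one hu, mul_one]

theorem IsStoppingSet.sum_prod_mul_prod_eq_one {S : (ι → α) → Finset ι} (hS : IsStoppingSet S)
    {w g : ι → α → R} (hw : ∀ b, ∑ a, w b a = 1) (hg : ∀ b, ∑ a, w b a * g b a = 1) :
    ∑ ω : ι → α, (∏ b, w b (ω b)) * ∏ b ∈ S ω, g b (ω b) = 1 := by
  rw [← hS.sum_prod_ite_eq_one hg hw]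
  refine Finset.sum_congr rfl fun ω _ => ?_
  have hite : ∏ b ∈ S ω, g b (ω b) = ∏ b, if b ∈ S ω then g b (ω b) else 1 := by
    rw [Finset.prod_ite_mem, Finset.univ_inter]
  rw [hite, ← Finset.prod_mul_distrib]
  refine Finset.prod_congr rfl fun b _ => ?_
  rw [mul_ite, mul_one]

end OptionalStopping

section FiniteGraph

variable {ι α : Type*}

/-- The graph of open bonds of the configuration `ω`, where `ends b` is the pair of endpoints of
the bond `b`. -/
def openGraph (ends : ι → Sym2 α) (ω : ι → Bool) : SimpleGraph α :=
  SimpleGraph.fromEdgeSet (ends '' {b | ω b = true})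

variable {ends : ι → Sym2 α} {ω ω' : ι → Bool} {x y z : α}

lemma openGraph_adj : (openGraph ends ω).Adj x y ↔ (∃ b, ω b = true ∧ ends b = s(x, y)) ∧ x ≠ y :=
  SimpleGraph.fromEdgeSet_adj _

lemma openGraph_mono (h : ∀ b, ω b = true → ω' b = true) : openGraph ends ω ≤ openGraph ends ω' :=
  SimpleGraph.fromEdgeSet_mono (Set.image_mono h)

lemma openGraph_comp_le {κ : Type*} (f : κ → ι) :
    openGraph (ends ∘ f) (ω ∘ f) ≤ openGraph ends ω :=
  SimpleGraph.fromEdgeSet_mono (by rintro _ ⟨b, hb, rfl⟩; exact ⟨f b, hb, rfl⟩)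

lemma reachable_of_open {b : ι} (hb : ω b = true) (hx : x ∈ ends b) (hy : y ∈ ends b) :
    (openGraph ends ω).Reachable x y := by
  by_cases hxy : x = y
  · exact hxy ▸ .rfl
  · exact (openGraph_adj.2 ⟨⟨b, hb, (Sym2.mem_and_mem_iff hxy).1 ⟨hx, hy⟩⟩, hxy⟩).reachable

lemma reachable_of_reachable_update_true [DecidableEq ι] {b : ι} (hb : ends b = s(x, y))
    (h : (openGraph ends (Function.update ω b true)).Reachable y z) :
    (openGraph ends ω).Reachable x z ∨ (openGraph ends ω).Reachable y z := by
  rw [SimpleGraph.reachable_iff_reflTransGen] at h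
  induction h with
  | refl => exact .inr .rfl
  | @tail u w _ huw ih =>
    obtain ⟨⟨c, hc, hends⟩, hne⟩ := openGraph_adj.1 huw
    rcases eq_or_ne c b with rfl | hcb
    · obtain ⟨-, rfl⟩ | ⟨rfl, -⟩ := Sym2.eq_iff.1 (hb.symm.trans hends)
      · exact .inr .rfl
      · exact .inl .rfl
    · rw [Function.update_of_ne hcb] at hc
      have hadj := openGraph_adj.2 ⟨⟨c, hc, hends⟩, hne⟩
      exact ih.imp (·.trans hadj.reachable) (·.trans hadj.reachable)

variable [Fintype ι]

open Classical in
/-- The bonds, open or closed, with an endpoint in an open cluster that meets `W`. -/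
def touching (ends : ι → Sym2 α) (W : Finset α) (ω : ι → Bool) : Finset ι :=
  {b | ∃ x ∈ W, ∃ y ∈ ends b, (openGraph ends ω).Reachable x y}

lemma mem_touching {W : Finset α} {b : ι} : b ∈ touching ends W ω ↔
    ∃ x ∈ W, ∃ y ∈ ends b, (openGraph ends ω).Reachable x y := by
  simp only [touching, Finset.mem_filter, Finset.mem_univ, true_and]

lemma adj_iff_of_eqOn_touching {W : Finset α} (h : ∀ b ∈ touching ends W ω, ω b = ω' b)
    (hx : x ∈ W) (hxy : (openGraph ends ω).Reachable x y) :
    (openGraph ends ω).Adj y z ↔ (openGraph ends ω').Adj y z := by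
  rw [openGraph_adj, openGraph_adj]
  refine and_congr_left fun _ => exists_congr fun b => and_congr_left fun hb => ?_
  rw [h b (mem_touching.2 ⟨x, hx, y, hb ▸ Sym2.mem_mk_left y z, hxy⟩)]

lemma reachable_iff_of_eqOn_touching {W : Finset α} (h : ∀ b ∈ touching ends W ω, ω b = ω' b)
    (hx : x ∈ W) : (openGraph ends ω).Reachable x y ↔ (openGraph ends ω').Reachable x y := by
  simp only [SimpleGraph.reachable_iff_reflTransGen]
  refine ⟨fun hxy => ?_, fun hxy => ?_⟩
  · induction hxy with
    | refl => exact .refl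
    | tail hxy hyz ih =>
      exact ih.tail ((adj_iff_of_eqOn_touching h hx
        ((SimpleGraph.reachable_iff_reflTransGen _ _).2 hxy)).1 hyz)
  · induction hxy with
    | refl => exact .refl
    | tail _ hyz ih =>
      exact ih.tail ((adj_iff_of_eqOn_touching h hx
        ((SimpleGraph.reachable_iff_reflTransGen _ _).2 ih)).2 hyz)

lemma isStoppingSet_touching (W : Finset α) : IsStoppingSet (touching ends W) := by
  intro ω ω' h
  ext b
  simp only [mem_touching]
  exact exists_congr fun x => and_congr_right fun hx => exists_congr fun y =>
    and_congr_right fun _ => (reachable_iff_of_eqOn_touching h hx).symm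

open Classical in
/-- The open clusters that meet `W`. -/
def clustersMeeting (ends : ι → Sym2 α) (W : Finset α) (ω : ι → Bool) :
    Finset (openGraph ends ω).ConnectedComponent :=
  W.image (openGraph ends ω).connectedComponentMk

open Classical in
/-- The bonds with an endpoint in the open cluster `C`. -/
def clusterBonds (C : (openGraph ends ω).ConnectedComponent) : Finset ι :=
  {b | ∃ y ∈ ends b, (openGraph ends ω).connectedComponentMk y = C}

lemma mem_clusterBonds {C : (openGraph ends ω).ConnectedComponent} {b : ι} :
    b ∈ clusterBonds C ↔ ∃ y ∈ ends b, (openGraph ends ω).connectedComponentMk y = C := by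
  simp only [clusterBonds, Finset.mem_filter, Finset.mem_univ, true_and]

lemma clusterBonds_connectedComponentMk (x : α) :
    clusterBonds ((openGraph ends ω).connectedComponentMk x) = touching ends {x} ω := by
  ext b
  simp only [mem_clusterBonds, mem_touching, Finset.mem_singleton, exists_eq_left,
    SimpleGraph.ConnectedComponent.eq]
  exact exists_congr fun y => and_congr_right fun _ => SimpleGraph.reachable_comm

open Classical in
/-- The open clusters that meet `W` and contain an endpoint of the bond `b`. -/
def incidentClusters (ends : ι → Sym2 α) (W : Finset α) (ω : ι → Bool) (b : ι) :
    Finset (openGraph ends ω).ConnectedComponent :=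
  {C ∈ clustersMeeting ends W ω | b ∈ clusterBonds C}

/-- The bonds whose endpoints lie in two distinct open clusters, both of which meet `W`. -/
def bridging (ends : ι → Sym2 α) (W : Finset α) (ω : ι → Bool) : Finset ι :=
  {b | 1 < (incidentClusters ends W ω b).card}

lemma mem_bridging {W : Finset α} {b : ι} :
    b ∈ bridging ends W ω ↔ 1 < (incidentClusters ends W ω b).card := by
  simp only [bridging, Finset.mem_filter, Finset.mem_univ, true_and]

lemma mk_mem_incidentClusters {W : Finset α} {b : ι} {w : α} (hw : w ∈ W) (hy : y ∈ ends b)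
    (h : (openGraph ends ω).Reachable w y) :
    (openGraph ends ω).connectedComponentMk y ∈ incidentClusters ends W ω b := by
  classical
  exact Finset.mem_filter.2 ⟨Finset.mem_image.2 ⟨w, hw, SimpleGraph.ConnectedComponent.eq.2 h⟩,
    mem_clusterBonds.2 ⟨y, hy, rfl⟩⟩

lemma mem_touching_iff_incidentClusters_nonempty {W : Finset α} {b : ι} :
    b ∈ touching ends W ω ↔ (incidentClusters ends W ω b).Nonempty := by
  classical
  refine ⟨fun h => ?_, ?_⟩
  · obtain ⟨w, hw, y, hy, hwy⟩ := mem_touching.1 h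
    exact ⟨_, mk_mem_incidentClusters hw hy hwy⟩
  · rintro ⟨C, hC⟩
    obtain ⟨hCW, hbC⟩ := Finset.mem_filter.1 hC
    obtain ⟨w, hw, rfl⟩ := Finset.mem_image.1 hCW
    obtain ⟨y, hy, hyw⟩ := mem_clusterBonds.1 hbC
    exact mem_touching.2 ⟨w, hw, y, hy, SimpleGraph.ConnectedComponent.eq.1 hyw.symm⟩

lemma card_incidentClusters_le_two (W : Finset α) (b : ι) :
    (incidentClusters ends W ω b).card ≤ 2 := by
  classical
  induction hb : ends b with
  | h x y =>
    refine (Finset.card_le_card (t := {(openGraph ends ω).connectedComponentMk x,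
      (openGraph ends ω).connectedComponentMk y}) fun C hC => ?_).trans Finset.card_le_two
    obtain ⟨z, hz, rfl⟩ := mem_clusterBonds.1 (Finset.mem_filter.1 hC).2
    rw [Finset.mem_insert, Finset.mem_singleton]
    rw [hb, Sym2.mem_iff] at hz
    exact hz.imp (congrArg _) (congrArg _)

lemma eq_false_of_mem_bridging {W : Finset α} {b : ι} (hb : b ∈ bridging ends W ω) :
    ω b = false := by
  classical
  by_contra hω
  obtain ⟨C, hC, C', hC', hne⟩ := Finset.one_lt_card.1 (mem_bridging.1 hb)
  obtain ⟨y, hy, rfl⟩ := mem_clusterBonds.1 (Finset.mem_filter.1 hC).2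
  obtain ⟨y', hy', rfl⟩ := mem_clusterBonds.1 (Finset.mem_filter.1 hC').2
  exact hne (SimpleGraph.ConnectedComponent.eq.2
    (reachable_of_open (Bool.not_eq_false _ ▸ hω) hy hy'))

lemma sum_clustersMeeting_sum_clusterBonds (W : Finset α) (f : ι → ℝ) :
    ∑ C ∈ clustersMeeting ends W ω, ∑ b ∈ clusterBonds C, f b =
      ∑ b, (incidentClusters ends W ω b).card * f b := by
  classical
  simp only [clusterBonds, Finset.sum_filter]
  rw [Finset.sum_comm]
  refine Finset.sum_congr rfl fun b _ => ?_
  simp only [incidentClusters, mem_clusterBonds]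
  rw [← Finset.sum_filter, Finset.sum_const, nsmul_eq_mul]

lemma sum_card_clusterBonds_le (W : Finset α) (ω : ι → Bool) :
    ∑ C ∈ clustersMeeting ends W ω, ((clusterBonds C).card : ℝ) ≤ 2 * Fintype.card ι := by
  calc ∑ C ∈ clustersMeeting ends W ω, ((clusterBonds C).card : ℝ)
      = ∑ b, ((incidentClusters ends W ω b).card : ℝ) := by
        simpa only [Finset.sum_const, nsmul_eq_mul, mul_one] using
          sum_clustersMeeting_sum_clusterBonds (ends := ends) (ω := ω) W fun _ => 1
    _ ≤ ∑ _b : ι, (2 : ℝ) :=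
        Finset.sum_le_sum fun b _ => mod_cast card_incidentClusters_le_two W b
    _ = 2 * Fintype.card ι := by
        rw [Finset.sum_const, Finset.card_univ, nsmul_eq_mul, mul_comm]

end FiniteGraph

section BridgingBound

variable {ι α : Type*} [Fintype ι] {ends : ι → Sym2 α} {p δ : ℝ}

/-- The state of a bond, centred under the Bernoulli law of parameter `p` and with reversed sign. -/
def centredState (p : ℝ) (t : Bool) : ℝ := if t then p - 1 else p

/-- The probability of a configuration of finitely many independent Bernoulli bonds. -/
def bernoulliWeight (p : ℝ) (ω : ι → Bool) : ℝ := ∏ b, if ω b then p else 1 - p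

lemma bernoulliWeight_nonneg (hp0 : 0 ≤ p) (hp1 : p ≤ 1) (ω : ι → Bool) :
    0 ≤ bernoulliWeight p ω :=
  Finset.prod_nonneg fun b _ => by split_ifs <;> linarith

lemma sum_bernoulliWeight [DecidableEq ι] (p : ℝ) :
    ∑ ω : ι → Bool, bernoulliWeight p ω = 1 :=
  sum_prod_eq_one (u := fun _ (t : Bool) => if t then p else 1 - p) fun _ => by simp

lemma IsStoppingSet.sum_bernoulliWeight_mul_prod [DecidableEq ι] {S : (ι → Bool) → Finset ι}
    (hS : IsStoppingSet S) (p δ : ℝ) :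
    ∑ ω : ι → Bool, bernoulliWeight p ω * ∏ b ∈ S ω, (1 + δ * centredState p (ω b)) = 1 := by
  refine hS.sum_prod_mul_prod_eq_one (w := fun _ (t : Bool) => if t then p else 1 - p)
    (g := fun _ (t : Bool) => 1 + δ * centredState p t) (fun _ => by simp) fun _ => ?_
  simp only [Fintype.sum_bool, centredState, if_true, Bool.false_eq_true, if_false]
  ring

lemma abs_centredState_le (hp0 : 0 ≤ p) (hp1 : p ≤ 1) (t : Bool) : |centredState p t| ≤ 1 := by
  cases t <;> simp [centredState, abs_le] <;> constructor <;> linarith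

-- Bond by bond, the right-hand side is `(k - min k 1) * centredState p (ω b)` with
-- `k = #(incidentClusters ends W ω b) ≤ 2`, and a bond with `k = 2` is closed.
lemma mul_card_bridging (W : Finset α) (ω : ι → Bool) :
    p * (bridging ends W ω).card =
      ∑ C ∈ clustersMeeting ends W ω, ∑ b ∈ clusterBonds C, centredState p (ω b) -
        ∑ b ∈ touching ends W ω, centredState p (ω b) := by
  classical
  have hbond : ∀ b, (if b ∈ bridging ends W ω then p else 0) =
      (incidentClusters ends W ω b).card * centredState p (ω b) -
        if b ∈ touching ends W ω then centredState p (ω b) else 0 := by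
    intro b
    by_cases hb : b ∈ bridging ends W ω
    · have hcard : (incidentClusters ends W ω b).card = 2 :=
        (card_incidentClusters_le_two W b).antisymm (mem_bridging.1 hb)
      have htouch : b ∈ touching ends W ω :=
        mem_touching_iff_incidentClusters_nonempty.2 (Finset.card_pos.1 (by omega))
      rw [if_pos hb, if_pos htouch, hcard, eq_false_of_mem_bridging hb]
      simp only [centredState, Bool.false_eq_true, if_false, Nat.cast_ofNat]
      ring
    · rw [if_neg hb]
      by_cases htouch : b ∈ touching ends W ω
      · have hcard : (incidentClusters ends W ω b).card = 1 :=
          (not_lt.1 (mt mem_bridging.2 hb)).antisymm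
            (Finset.card_pos.2 (mem_touching_iff_incidentClusters_nonempty.1 htouch))
        rw [if_pos htouch, hcard, Nat.cast_one, one_mul, sub_self]
      · have hcard : incidentClusters ends W ω b = ∅ :=
          Finset.not_nonempty_iff_eq_empty.1
            (mt mem_touching_iff_incidentClusters_nonempty.2 htouch)
        rw [if_neg htouch, hcard, Finset.card_empty, Nat.cast_zero, zero_mul, sub_self]
  rw [sum_clustersMeeting_sum_clusterBonds, ← Finset.univ_inter (touching ends W ω),
    ← Finset.sum_ite_mem, ← Finset.sum_sub_distrib, ← Finset.sum_congr rfl fun b _ => hbond b,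
    Finset.sum_ite_mem, Finset.univ_inter, Finset.sum_const, nsmul_eq_mul, mul_comm]

lemma sum_clustersMeeting_prod_le (hp0 : 0 ≤ p) (hp1 : p ≤ 1) (hδ0 : 0 ≤ δ) (hδ : δ ≤ 1 / 2)
    (W : Finset α) (ω : ι → Bool) :
    ∑ C ∈ clustersMeeting ends W ω, ∏ b ∈ clusterBonds C, (1 + δ * centredState p (ω b)) ≤
      ∑ x ∈ W, ∏ b ∈ touching ends {x} ω, (1 + δ * centredState p (ω b)) := by
  classical
  simp only [← clusterBonds_connectedComponentMk]
  refine Finset.sum_image_le_of_nonneg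
    (f := fun C => ∏ b ∈ clusterBonds C, (1 + δ * centredState p (ω b))) fun x _ =>
      Finset.prod_nonneg fun b _ => ?_
  nlinarith [(abs_le.1 (abs_centredState_le hp0 hp1 (ω b))).1]

lemma mul_card_bridging_le_prod (hp0 : 0 ≤ p) (hp1 : p ≤ 1) (hδ0 : 0 ≤ δ) (hδ : δ ≤ 1 / 2)
    (W : Finset α) (ω : ι → Bool) :
    δ * (p * (bridging ends W ω).card) ≤ 6 * δ ^ 2 * Fintype.card ι +
      ∑ x ∈ W, ∏ b ∈ touching ends {x} ω, (1 + δ * centredState p (ω b)) +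
        ∏ b ∈ touching ends W ω, (1 + -δ * centredState p (ω b)) := by
  have habs : ∀ ε : ℝ, |ε| = δ → ∀ t, |ε * centredState p t| ≤ δ := fun ε hε t => by
    rw [abs_mul, hε]
    exact mul_le_of_le_one_right hδ0 (abs_centredState_le hp0 hp1 t)
  have hclusters := Finset.sum_le_sum fun C (_ : C ∈ clustersMeeting ends W ω) =>
    sum_le_card_mul_add_prod (clusterBonds C) hδ fun b _ => habs δ (abs_of_nonneg hδ0) (ω b)
  have htouching := sum_le_card_mul_add_prod (touching ends W ω) hδ fun b _ =>
    habs (-δ) (by rw [abs_neg, abs_of_nonneg hδ0]) (ω b)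
  have hcard : ((touching ends W ω).card : ℝ) ≤ Fintype.card ι := mod_cast Finset.card_le_univ _
  rw [Finset.sum_add_distrib, ← Finset.mul_sum] at hclusters
  simp only [← Finset.mul_sum] at hclusters htouching
  rw [mul_card_bridging, mul_sub]
  nlinarith [sum_clustersMeeting_prod_le (ends := ends) hp0 hp1 hδ0 hδ W ω,
    mul_le_mul_of_nonneg_left (sum_card_clusterBonds_le (ends := ends) W ω) (sq_nonneg δ),
    mul_le_mul_of_nonneg_left hcard (sq_nonneg δ)]

theorem mul_sum_bernoulliWeight_mul_card_bridging_le [DecidableEq ι] (hp0 : 0 ≤ p)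
    (hp1 : p ≤ 1) (hδ0 : 0 ≤ δ) (hδ : δ ≤ 1 / 2) (W : Finset α) :
    δ * p * ∑ ω : ι → Bool, bernoulliWeight p ω * (bridging ends W ω).card ≤
      6 * δ ^ 2 * Fintype.card ι + W.card + 1 := by
  calc δ * p * ∑ ω : ι → Bool, bernoulliWeight p ω * (bridging ends W ω).card
      = ∑ ω, bernoulliWeight p ω * (δ * (p * (bridging ends W ω).card)) := by
        rw [Finset.mul_sum]
        exact Finset.sum_congr rfl fun ω _ => by ring
    _ ≤ ∑ ω, bernoulliWeight p ω * (6 * δ ^ 2 * Fintype.card ι +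
          ∑ x ∈ W, ∏ b ∈ touching ends {x} ω, (1 + δ * centredState p (ω b)) +
            ∏ b ∈ touching ends W ω, (1 + -δ * centredState p (ω b))) :=
        Finset.sum_le_sum fun ω _ => mul_le_mul_of_nonneg_left
          (mul_card_bridging_le_prod hp0 hp1 hδ0 hδ W ω) (bernoulliWeight_nonneg hp0 hp1 ω)
    _ = 6 * δ ^ 2 * Fintype.card ι + W.card + 1 := by
        simp only [mul_add, Finset.sum_add_distrib, ← Finset.sum_mul, sum_bernoulliWeight, one_mul,
          (isStoppingSet_touching _).sum_bernoulliWeight_mul_prod, Finset.mul_sum]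
        rw [Finset.sum_comm]
        simp only [(isStoppingSet_touching _).sum_bernoulliWeight_mul_prod, Finset.sum_const,
          nsmul_eq_mul, mul_one]

end BridgingBound

section InfiniteCluster

variable {α β ι : Type*} {G G' : SimpleGraph α} {H : SimpleGraph β} {x y : α}

/-- The vertex `x` is joined to infinity in `G`: its connected component is infinite. -/
def InInfiniteCluster (G : SimpleGraph α) (x : α) : Prop := {y | G.Reachable x y}.Infinite

lemma InInfiniteCluster.of_reachable (hx : InInfiniteCluster G x) (h : G.Reachable x y) :
    InInfiniteCluster G y :=
  hx.mono fun _ hz => h.symm.trans hz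

lemma InInfiniteCluster.mono (hx : InInfiniteCluster G x) (h : G ≤ G') : InInfiniteCluster G' x :=
  Set.Infinite.mono (fun _ hz => hz.mono h) hx

lemma inInfiniteCluster_iso_iff (φ : G ≃g H) :
    InInfiniteCluster H (φ x) ↔ InInfiniteCluster G x := by
  have himage : {z | H.Reachable (φ x) z} = φ '' {y | G.Reachable x y} := by
    ext z
    obtain ⟨y, rfl⟩ := φ.surjective z
    simp only [Set.mem_ofPred_eq, φ.injective.mem_set_image, SimpleGraph.Iso.reachable_iff]
  rw [InInfiniteCluster, InInfiniteCluster, himage, Set.infinite_image_iff φ.injective.injOn]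

lemma inInfiniteCluster_iff_forall_finset :
    InInfiniteCluster G x ↔ ∀ T : Finset α, ∃ y, y ∉ T ∧ G.Reachable x y := by
  refine ⟨fun h T => ?_, fun h hfin => ?_⟩
  · obtain ⟨y, hy, hyT⟩ := h.exists_notMem_finset T
    exact ⟨y, hyT, hy⟩
  · obtain ⟨y, hyT, hy⟩ := h hfin.toFinset
    exact hyT (hfin.mem_toFinset.2 hy)

lemma isOpen_openGraph_adj (ends : ι → Sym2 α) (x y : α) :
    IsOpen {ω | (openGraph ends ω).Adj x y} := by
  have hunion : {ω | (openGraph ends ω).Adj x y} =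
      ⋃ b ∈ {b | ends b = s(x, y) ∧ x ≠ y}, {ω : ι → Bool | ω b = true} := by
    ext ω
    simp only [openGraph_adj, Set.mem_ofPred_eq, Set.mem_iUnion, exists_prop]
    exact ⟨fun ⟨⟨b, hb, hends⟩, hne⟩ => ⟨b, ⟨hends, hne⟩, hb⟩,
      fun ⟨b, ⟨hends, hne⟩, hb⟩ => ⟨⟨b, hb, hends⟩, hne⟩⟩
  rw [hunion]
  exact isOpen_biUnion fun b _ => (isOpen_discrete {true}).preimage
    (continuous_apply b : Continuous fun ω : ι → Bool => ω b)

lemma isOpen_openGraph_reachable (ends : ι → Sym2 α) (x y : α) :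
    IsOpen {ω | (openGraph ends ω).Reachable x y} := by
  rw [isOpen_iff_mem_nhds]
  intro ω hω
  induction (SimpleGraph.reachable_iff_reflTransGen x y).1 hω with
  | refl => exact univ_mem' fun ω => .rfl
  | tail hxy hyz ih =>
    filter_upwards [ih ((SimpleGraph.reachable_iff_reflTransGen _ _).2 hxy),
      (isOpen_openGraph_adj ends _ _).mem_nhds hyz] with ω' hxy' hyz'
    exact SimpleGraph.Reachable.trans hxy' hyz'.reachable

variable [Countable ι]

lemma measurableSet_openGraph_reachable (ends : ι → Sym2 α) (x y : α) :
    MeasurableSet {ω | (openGraph ends ω).Reachable x y} :=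
  (isOpen_openGraph_reachable ends x y).measurableSet

lemma measurableSet_inInfiniteCluster [Countable α] (ends : ι → Sym2 α) (x : α) :
    MeasurableSet {ω | InInfiniteCluster (openGraph ends ω) x} := by
  simp only [inInfiniteCluster_iff_forall_finset]
  exact measurableSet_setOfPred.2 (.forall fun T => .exists fun y => measurable_const.and
    (measurableSet_setOfPred.1 (measurableSet_openGraph_reachable ends x y)))

end InfiniteCluster

section Lattice

variable {d : ℕ} {ω : Config d} {x y e : V d}

/-- The endpoints of a nearest-neighbour bond. -/
def bondEnds (b : EdgeIx d) : Sym2 (V d) := s(b.1, b.1 + unitVec d b.2)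

/-- The graph of open bonds of a percolation configuration. -/
abbrev openLattice (ω : Config d) : SimpleGraph (V d) := openGraph bondEnds ω

lemma shift_zero (ω : Config d) : shift 0 ω = ω := by
  ext b
  simp only [shift, add_zero, Prod.mk.eta]

lemma shift_shift (x y : V d) (ω : Config d) : shift x (shift y ω) = shift (x + y) ω := by
  ext b
  simp only [shift, add_assoc]

lemma measurable_shift (x : V d) : Measurable (shift x : Config d → Config d) :=
  measurable_pi_lambda _ fun _ => measurable_pi_apply _

lemma bondEnds_add (b : EdgeIx d) (v : V d) :
    bondEnds (b.1 + v, b.2) = (bondEnds b).map (· + v) := by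
  simp only [bondEnds, Sym2.map_mk, add_right_comm]

/-- Translation by `v` maps the open bonds of `shift v ω` onto those of `ω`. -/
def shiftIso (v : V d) (ω : Config d) : openLattice (shift v ω) ≃g openLattice ω where
  toEquiv := Equiv.addRight v
  map_rel_iff' {x y} := by
    simp only [openGraph_adj, Equiv.coe_addRight, ne_eq, add_left_inj]
    refine and_congr_left fun _ => (Equiv.exists_congr
      ((Equiv.addRight v).prodCongr (Equiv.refl (Fin d))) fun b => ?_).symm
    simp only [Equiv.prodCongr_apply, Prod.map, Equiv.coe_addRight, Equiv.refl_apply,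
      bondEnds_add, shift]
    rw [show s(x + v, y + v) = s(x, y).map (· + v) from rfl,
      (Sym2.map.injective (add_left_injective v)).eq_iff]

lemma unitVec_ne_zero (i : Fin d) : unitVec d i ≠ 0 := fun h => by
  simpa [unitVec] using congrFun h i

lemma closure_range_unitVec : AddSubgroup.closure (Set.range (unitVec d)) = ⊤ := by
  refine eq_top_iff.2 fun x _ => ?_
  have hx : x = ∑ i, x i • unitVec d i := by
    ext j
    simp [unitVec, Finset.sum_apply]
  rw [hx]
  exact sum_mem fun i _ => zsmul_mem (AddSubgroup.subset_closure (Set.mem_range_self i)) _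

lemma edgeOpen_iff_adj : edgeOpen ω x e ↔ (openLattice ω).Adj x (x + e) := by
  rw [openGraph_adj]
  constructor
  · rintro ⟨i, ⟨rfl, hi⟩ | ⟨rfl, hi⟩⟩
    · exact ⟨⟨(x, i), hi, rfl⟩, by simp [unitVec_ne_zero]⟩
    · refine ⟨⟨(x - unitVec d i, i), hi, ?_⟩, by simp [unitVec_ne_zero]⟩
      rw [bondEnds, sub_add_cancel, Sym2.eq_swap, sub_eq_add_neg]
  · rintro ⟨⟨⟨z, i⟩, hi, hends⟩, -⟩
    obtain ⟨rfl, h⟩ | ⟨rfl, h⟩ := Sym2.eq_iff.1 hends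
    · exact ⟨i, .inl ⟨(add_left_cancel h).symm, hi⟩⟩
    · have he : e = -unitVec d i := eq_neg_of_add_eq_zero_left (by simpa [add_assoc] using h)
      exact ⟨i, .inr ⟨he, by rwa [he, ← sub_eq_add_neg] at hi⟩⟩

lemma mem_Ud_of_edgeOpen (h : edgeOpen ω x e) : e ∈ Ud d := by
  obtain ⟨i, ⟨rfl, -⟩ | ⟨rfl, -⟩⟩ := h <;> simp [Ud]

lemma trans_eq_zero_iff : trans ω x e = 0 ↔ ¬ edgeOpen ω x e := by
  classical
  rw [trans]
  split_ifs with h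
  · have hdeg : 0 < openDeg ω x :=
      Finset.card_pos.2 ⟨e, Finset.mem_filter.2 ⟨mem_Ud_of_edgeOpen h, h⟩⟩
    simp only [h, not_true_eq_false, iff_false]
    positivity
  · simp only [h, not_false_eq_true]

lemma edgeOpen_sub_iff_adj : edgeOpen ω x (y - x) ↔ (openLattice ω).Adj x y := by
  rw [edgeOpen_iff_adj, add_sub_cancel]

lemma reachable_iff_exists_isOpenPath : (openLattice ω).Reachable x y ↔
    ∃ (γ : ℕ → V d) (n : ℕ), γ 0 = x ∧ IsOpenPath ω γ n ∧ γ n = y := by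
  constructor
  · rintro ⟨w⟩
    refine ⟨w.getVert, w.length, w.getVert_zero, fun k hk => ?_, w.getVert_length⟩
    have hopen := edgeOpen_sub_iff_adj.2 (w.adj_getVert_succ hk)
    exact ⟨mem_Ud_of_edgeOpen hopen, hopen⟩
  · rintro ⟨γ, n, rfl, hγ, rfl⟩
    induction n with
    | zero => exact .rfl
    | succ n ih =>
      exact (ih fun k hk => hγ k (hk.trans n.lt_succ_self)).trans
        (edgeOpen_sub_iff_adj.1 (hγ n n.lt_succ_self).2).reachable

lemma finite_iff_exists_inBox {S : Set (V d)} : S.Finite ↔ ∃ R : ℕ, ∀ y ∈ S, inBox y R := by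
  have hbox : ∀ (y : V d) (R : ℕ), inBox y R ↔ y ∈ Metric.closedBall 0 (R : ℝ) := fun y R => by
    rw [mem_closedBall_zero_iff, pi_norm_le_iff_of_nonneg R.cast_nonneg]
    rfl
  simp only [hbox]
  refine ⟨fun h => ?_, fun ⟨R, hR⟩ => (isCompact_closedBall _ _).finite_of_discrete.subset hR⟩
  obtain ⟨r, hr⟩ := (Metric.isBounded_iff_subset_closedBall 0).1 h.isBounded
  obtain ⟨R, hR⟩ := exists_nat_ge r
  exact ⟨R, fun y hy => Metric.closedBall_subset_closedBall hR (hr hy)⟩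

lemma memCluster_iff : memCluster ω x ↔ InInfiniteCluster (openLattice ω) x := by
  rw [InInfiniteCluster, Set.Infinite, finite_iff_exists_inBox, memCluster]
  push Not
  refine forall_congr' fun R => ⟨?_, ?_⟩
  · rintro ⟨γ, n, hx, hγ, hR⟩
    exact ⟨γ n, reachable_iff_exists_isOpenPath.2 ⟨γ, n, hx, hγ, rfl⟩, hR⟩
  · rintro ⟨y, hxy, hR⟩
    obtain ⟨γ, n, hx, hγ, rfl⟩ := reachable_iff_exists_isOpenPath.1 hxy
    exact ⟨γ, n, hx, hγ, hR⟩

lemma measurableSet_cluZero : MeasurableSet (cluZero d) := by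
  simp only [cluZero, memCluster_iff]
  exact measurableSet_inInfiniteCluster bondEnds 0

lemma shift_mem_cluZero : shift x ω ∈ cluZero d ↔ InInfiniteCluster (openLattice ω) x := by
  rw [cluZero, Set.mem_ofPred_eq, memCluster_iff, ← inInfiniteCluster_iso_iff (shiftIso x ω)]
  simp [shiftIso]

end Lattice

section EnvironmentKernel

variable {d : ℕ} {κ : Config d → Step d → ℝ} {ω : Config d} {D : Set (Config d)}

/-- The environment Markov kernel `R_κ`, which moves from `ω` to `τ_e ω` with probability `κ ω e`;
its action on functions is `kernelStep κ`. -/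
def envKernel (κ : Config d → Step d → ℝ) (hκ : ∀ e, Measurable fun ω => κ ω e) :
    Kernel (Config d) (Config d) where
  toFun ω := ∑ e : Step d, ENNReal.ofReal (κ ω e) • Measure.dirac (shift e.1 ω)
  measurable' := Measure.measurable_of_measurable_coe _ fun D hD => by
    simp only [Measure.finsetSum_apply, Measure.smul_apply, smul_eq_mul]
    exact Finset.measurable_sum _ fun e _ => (hκ e).ennreal_ofReal.mul
      ((Measure.measurable_coe hD).comp (Measure.measurable_dirac.comp (measurable_shift e.1)))

variable {hκ : ∀ e, Measurable fun ω => κ ω e}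

lemma envKernel_apply (hD : MeasurableSet D) : envKernel κ hκ ω D =
    ∑ e : Step d, ENNReal.ofReal (κ ω e) * D.indicator 1 (shift e.1 ω) := by
  simp only [envKernel, Kernel.coe_mk, Measure.finsetSum_apply, Measure.smul_apply, smul_eq_mul,
    Measure.dirac_apply' _ hD]

lemma envKernel_eq_ofReal_kernelStep (hκ0 : ∀ e, 0 ≤ κ ω e) (hD : MeasurableSet D) :
    envKernel κ hκ ω D = ENNReal.ofReal (kernelStep κ (D.indicator 1) ω) := by
  have hterm : ∀ e : Step d, 0 ≤ κ ω e * D.indicator (1 : Config d → ℝ) (shift e.1 ω) := fun e =>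
    mul_nonneg (hκ0 e) (Set.indicator_nonneg (fun _ _ => zero_le_one) _)
  rw [envKernel_apply hD, kernelStep, ENNReal.ofReal_sum_of_nonneg fun e _ => hterm e]
  refine Finset.sum_congr rfl fun e _ => ?_
  by_cases he : shift e.1 ω ∈ D <;> simp [he]

lemma shift_mem_of_envKernel_compl_eq_zero (hD : MeasurableSet D)
    (h : envKernel κ hκ ω Dᶜ = 0) {e : Step d} (he : 0 < κ ω e) : shift e.1 ω ∈ D := by
  rw [envKernel_apply hD.compl, Finset.sum_eq_zero_iff] at h
  simpa [he.not_ge] using h e (Finset.mem_univ e)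

lemma isProbabilityMeasure_envKernel (hκ0 : ∀ e, 0 ≤ κ ω e) (hκ1 : ∑ e, κ ω e = 1) :
    IsProbabilityMeasure (envKernel κ hκ ω) := by
  refine ⟨?_⟩
  rw [envKernel_eq_ofReal_kernelStep hκ0 .univ, kernelStep]
  simp only [Set.indicator_univ, Pi.one_apply, mul_one, hκ1, ENNReal.ofReal_one]

lemma envKernel_compl_eq_zero (hκ0 : ∀ e, 0 ≤ κ ω e) (hκ1 : ∑ e, κ ω e = 1)
    (hD : MeasurableSet D) (h : kernelStep κ (D.indicator 1) ω = 1) :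
    envKernel κ hκ ω Dᶜ = 0 := by
  have := isProbabilityMeasure_envKernel (hκ := hκ) hκ0 hκ1
  rw [prob_compl_eq_zero_iff hD, envKernel_eq_ofReal_kernelStep hκ0 hD, h, ENNReal.ofReal_one]

lemma kernelStep_indicator_nonneg (hκ0 : ∀ e, 0 ≤ κ ω e) :
    0 ≤ kernelStep κ (D.indicator 1) ω :=
  Finset.sum_nonneg fun e _ =>
    mul_nonneg (hκ0 e) (Set.indicator_nonneg (fun _ _ => zero_le_one) _)

lemma measurable_kernelStep (hκ : ∀ e, Measurable fun ω => κ ω e) {f : Config d → ℝ}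
    (hf : Measurable f) : Measurable (kernelStep κ f) :=
  Finset.measurable_sum _ fun e _ => (hκ e).mul (hf.comp (measurable_shift e.1))

lemma IsInvariant.invariant_envKernel {Q : Measure (Config d)} [IsFiniteMeasure Q]
    (hκ0 : ∀ ω e, 0 ≤ κ ω e) (hκ1 : ∀ᵐ ω ∂Q, ∑ e, κ ω e = 1) (hQ : IsInvariant κ Q) :
    Kernel.Invariant (envKernel κ hκ) Q := by
  ext D hD
  have hmeas : Measurable (D.indicator (1 : Config d → ℝ)) := measurable_one.indicator hD
  have hint : Integrable (kernelStep κ (D.indicator 1)) Q := by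
    refine .of_bound (measurable_kernelStep hκ hmeas).aestronglyMeasurable 1 ?_
    filter_upwards [hκ1] with ω hω
    have := isProbabilityMeasure_envKernel (hκ := hκ) (hκ0 ω) hω
    rw [Real.norm_of_nonneg (kernelStep_indicator_nonneg (hκ0 ω)), ← ENNReal.ofReal_le_one,
      ← envKernel_eq_ofReal_kernelStep (hκ := hκ) (hκ0 ω) hD]
    exact prob_le_one
  have hbounded : ∀ ω, |D.indicator (1 : Config d → ℝ) ω| ≤ 1 := fun ω => by
    by_cases hω : ω ∈ D <;> simp [hω]
  calc Q.bind (envKernel κ hκ) D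
      = ∫⁻ ω, ENNReal.ofReal (kernelStep κ (D.indicator 1) ω) ∂Q := by
        rw [Measure.bind_apply hD (Kernel.aemeasurable _)]
        exact lintegral_congr fun ω => envKernel_eq_ofReal_kernelStep (hκ0 ω) hD
    _ = ENNReal.ofReal (∫ ω, kernelStep κ (D.indicator 1) ω ∂Q) :=
        (ofReal_integral_eq_lintegral_ofReal hint
          (ae_of_all _ fun ω => kernelStep_indicator_nonneg (hκ0 ω))).symm
    _ = Q D := by
        rw [hQ _ hmeas ⟨1, hbounded⟩, integral_indicator_one hD, ofReal_measureReal]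

end EnvironmentKernel

section ErgodicPercolation

variable {d : ℕ} {P : Measure (Config d)} {ω : Config d} {x y : V d} {D : Set (Config d)}

/-- A stationary percolation model, ergodic under the shifts of `ℤ^d`, with almost surely at most
one infinite open cluster. -/
structure IsErgodicPercolation (P : Measure (Config d)) : Prop where
  measurePreserving_shift : ∀ x, MeasurePreserving (shift x) P P
  eq_zero_or_compl_eq_zero : ∀ E, MeasurableSet E → (∀ x, shift x ⁻¹' E = E) → P E = 0 ∨ P Eᶜ = 0
  ae_reachable : ∀ᵐ ω ∂P, ∀ x y, InInfiniteCluster (openLattice ω) x →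
    InInfiniteCluster (openLattice ω) y → (openLattice ω).Reachable x y

/-- The environments that look like an element of `D` from some vertex of an infinite cluster. -/
def seenFromInfinity (D : Set (Config d)) : Set (Config d) :=
  {ω | ∃ x, InInfiniteCluster (openLattice ω) x ∧ shift x ω ∈ D}

lemma measurableSet_seenFromInfinity (hD : MeasurableSet D) :
    MeasurableSet (seenFromInfinity D) :=
  measurableSet_setOfPred.2 <| .exists fun x =>
    (measurableSet_setOfPred.1 (measurableSet_inInfiniteCluster bondEnds x)).and
      (measurableSet_setOfPred.1 (measurable_shift x hD))

lemma preimage_shift_seenFromInfinity (v : V d) (D : Set (Config d)) :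
    shift v ⁻¹' seenFromInfinity D = seenFromInfinity D := by
  ext ω
  refine Equiv.exists_congr (Equiv.addRight v) fun x => ?_
  rw [← inInfiniteCluster_iso_iff (shiftIso v ω), shift_shift]
  rfl

/-- The environment stays in `D` along every open bond leaving an infinite cluster vertex
from which it is in `D`. -/
def StaysIn (D : Set (Config d)) (ω : Config d) : Prop :=
  ∀ ⦃x y⦄, InInfiniteCluster (openLattice ω) x → (openLattice ω).Adj x y →
    shift x ω ∈ D → shift y ω ∈ D

lemma IsErgodicPercolation.ae_staysIn [IsFiniteMeasure P] (hP : IsErgodicPercolation P)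
    (h : ∀ᵐ ω ∂P[|cluZero d], ω ∈ D → ∀ e : Step d, edgeOpen ω 0 e.1 → shift e.1 ω ∈ D) :
    ∀ᵐ ω ∂P, StaysIn D ω := by
  have hcond : ∀ᵐ ω ∂P, ω ∈ cluZero d → ω ∈ D →
      ∀ e : Step d, edgeOpen ω 0 e.1 → shift e.1 ω ∈ D := by
    rw [ProbabilityTheory.cond, Measure.ae_ennreal_smul_measure_iff
      (ENNReal.inv_ne_zero.2 (measure_ne_top P _)), ae_restrict_iff' measurableSet_cluZero] at h
    exact h
  have hshift := ae_all_iff.2 fun x =>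
    (hP.measurePreserving_shift x).quasiMeasurePreserving.ae hcond
  filter_upwards [hshift] with ω hω x y hx hxy hxD
  have hopen : edgeOpen (shift x ω) 0 (y - x) := by
    rw [edgeOpen_iff_adj, ← (shiftIso x ω).map_adj_iff]
    simpa [shiftIso] using hxy
  have := hω x (shift_mem_cluZero.2 hx) hxD ⟨y - x, mem_Ud_of_edgeOpen hopen⟩ hopen
  rwa [shift_shift, sub_add_cancel] at this

lemma StaysIn.shift_mem_of_reachable (h : StaysIn D ω) (hx : InInfiniteCluster (openLattice ω) x)
    (hxy : (openLattice ω).Reachable x y) (hxD : shift x ω ∈ D) : shift y ω ∈ D := by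
  induction (SimpleGraph.reachable_iff_reflTransGen x y).1 hxy with
  | refl => exact hxD
  | tail hxz hzy ih =>
    have hxz := (SimpleGraph.reachable_iff_reflTransGen _ _).2 hxz
    exact h (hx.of_reachable hxz) hzy (ih hxz)

lemma IsErgodicPercolation.cond_eq_zero_or_compl_eq_zero [IsFiniteMeasure P]
    (hP : IsErgodicPercolation P) (hD : MeasurableSet D)
    (h : ∀ᵐ ω ∂P[|cluZero d], ω ∈ D → ∀ e : Step d, edgeOpen ω 0 e.1 → shift e.1 ω ∈ D) :
    P[|cluZero d] D = 0 ∨ P[|cluZero d] Dᶜ = 0 := by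
  have hmem : ∀ᵐ ω ∂P[|cluZero d], ω ∈ D ↔ ω ∈ seenFromInfinity D := by
    filter_upwards [ae_cond_mem measurableSet_cluZero,
      cond_absolutelyContinuous.ae_le (hP.ae_staysIn h),
      cond_absolutelyContinuous.ae_le hP.ae_reachable] with ω hω hstays hunique
    have h0 : InInfiniteCluster (openLattice ω) 0 := memCluster_iff.1 hω
    refine ⟨fun hωD => ⟨0, h0, by rwa [shift_zero]⟩, fun ⟨x, hx, hxD⟩ => ?_⟩
    simpa only [shift_zero] using hstays.shift_mem_of_reachable hx (hunique x 0 hx h0) hxD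
  have hD_eq : D =ᵐ[P[|cluZero d]] seenFromInfinity D := eventuallyEq_set.2 hmem
  rw [measure_congr hD_eq, measure_congr hD_eq.compl]
  exact (hP.eq_zero_or_compl_eq_zero _ (measurableSet_seenFromInfinity hD)
    fun x => preimage_shift_seenFromInfinity x D).imp
      (fun h => cond_absolutelyContinuous h) fun h => cond_absolutelyContinuous h

lemma IsErgodicPercolation.isIndecomposable_envKernel [IsFiniteMeasure P]
    (hP : IsErgodicPercolation P) {κ : Config d → Step d → ℝ} (hκ : κ ∈ PiT d (P[|cluZero d])) :
    IsIndecomposable (envKernel κ hκ.1) (P[|cluZero d]) := by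
  intro D hD habs
  refine hP.cond_eq_zero_or_compl_eq_zero hD ?_
  filter_upwards [habs, ae_all_iff.2 hκ.2.2.2.2] with ω hω hzero hωD e he
  have hκe : 0 < κ ω e :=
    (hκ.2.1 ω e).lt_of_ne' fun h => trans_eq_zero_iff.1 ((hzero e).1 h) he
  exact shift_mem_of_envKernel_compl_eq_zero hD (hω hωD) hκe

end ErgodicPercolation

section ProductMeasure

variable {ι : Type*} {X : ι → Type*} [∀ i, MeasurableSpace (X i)] {α : Type*} [MeasurableSpace α]

lemma measurePreserving_update_infinitePi [DecidableEq ι] (μ : ∀ i, Measure (X i))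
    [∀ i, IsProbabilityMeasure (μ i)] (j : ι) :
    MeasurePreserving (fun q : X j × (∀ i, X i) => Function.update q.2 j q.1)
      ((μ j).prod (Measure.infinitePi μ)) (Measure.infinitePi μ) := by
  have hmeas : Measurable fun q : X j × (∀ i, X i) => Function.update q.2 j q.1 :=
    measurable_update'.comp measurable_swap
  refine ⟨hmeas, Measure.eq_infinitePi μ fun s t ht => ?_⟩
  have hpreimage : (fun q : X j × (∀ i, X i) => Function.update q.2 j q.1) ⁻¹' Set.pi s t =
      (if j ∈ s then t j else Set.univ) ×ˢ Set.pi (s.erase j) t := by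
    ext ⟨a, ω⟩
    simp only [Set.mem_preimage, Set.mem_pi, Set.mem_prod, Finset.mem_coe, Finset.mem_erase]
    refine ⟨fun h => ⟨?_, fun i hi => ?_⟩, fun h i hi => ?_⟩
    · split_ifs with hj
      · simpa only [Function.update_self] using h j hj
      · exact Set.mem_univ a
    · simpa only [Function.update_of_ne hi.1] using h i hi.2
    · rcases eq_or_ne i j with rfl | hij
      · simpa only [Function.update_self, hi, if_true] using h.1
      · simpa only [Function.update_of_ne hij] using h.2 i ⟨hij, hi⟩
  rw [Measure.map_apply hmeas (.pi s.countable_toSet fun i _ => ht i), hpreimage,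
    Measure.prod_prod, Measure.infinitePi_pi μ fun i _ => ht i]
  split_ifs with hj
  · exact Finset.mul_prod_erase s (fun i => μ i (t i)) hj
  · rw [measure_univ, one_mul, Finset.erase_eq_of_notMem hj]

lemma infinitePi_preimage_update_eq_zero [DecidableEq ι] {μ : ∀ i, Measure (X i)}
    [∀ i, IsProbabilityMeasure (μ i)] {j : ι} {a : X j} (ha : μ j {a} ≠ 0) {N : Set (∀ i, X i)}
    (hN : Measure.infinitePi μ N = 0) :
    Measure.infinitePi μ ((fun ω => Function.update ω j a) ⁻¹' N) = 0 := by
  have hae := Measure.ae_ae_of_ae_prod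
    ((measurePreserving_update_infinitePi μ j).quasiMeasurePreserving.ae
      (measure_eq_zero_iff_ae_notMem.1 hN))
  by_contra hpos
  have hatom : ¬ ∀ᵐ ω ∂Measure.infinitePi μ, Function.update ω j a ∉ N :=
    fun h => hpos (measure_eq_zero_iff_ae_notMem.2 h)
  exact ha (measure_mono_null (Set.singleton_subset_iff.2 hatom) (ae_iff.1 hae))

variable (ν : Measure α) [IsProbabilityMeasure ν] {E : Set (ι → α)}

lemma measurePreserving_comp_infinitePi (σ : Equiv.Perm ι) :
    MeasurePreserving (fun ω : ι → α => ω ∘ σ) (Measure.infinitePi fun _ => ν)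
      (Measure.infinitePi fun _ => ν) := by
  classical
  have hmeas : Measurable fun ω : ι → α => ω ∘ σ :=
    measurable_pi_lambda _ fun i => measurable_pi_apply _
  refine ⟨hmeas, Measure.eq_infinitePi _ fun s t ht => ?_⟩
  have hpreimage : (fun ω : ι → α => ω ∘ σ) ⁻¹' Set.pi s t =
      Set.pi (s.map σ.toEmbedding) (t ∘ σ.symm) := by
    ext ω
    simp only [Set.mem_preimage, Set.mem_pi, Finset.mem_coe, Finset.forall_mem_map,
      Function.comp_apply, Equiv.coe_toEmbedding, Equiv.symm_apply_apply]
  rw [Measure.map_apply hmeas (.pi s.countable_toSet fun i _ => ht i), hpreimage,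
    Measure.infinitePi_pi (fun _ => ν) (t := t ∘ σ.symm) fun i _ => ht _, Finset.prod_map]
  simp only [Function.comp_apply, Equiv.coe_toEmbedding, Equiv.symm_apply_apply]

lemma infinitePi_cylinder_inter_preimage_comp {s : Finset ι} {S : Set (s → α)}
    (hS : MeasurableSet S) {σ : Equiv.Perm ι} (hσ : Disjoint s (s.map σ.toEmbedding)) :
    (Measure.infinitePi fun _ => ν) (cylinder s S ∩ (· ∘ σ) ⁻¹' cylinder s S) =
      (Measure.infinitePi fun _ => ν) (cylinder s S) ^ 2 := by
  have hindep := (iIndepFun_infinitePi (P := fun _ : ι => ν) (X := fun _ => id)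
    fun _ => measurable_id).indepFun_finset s _ hσ fun i => measurable_pi_apply i
  have hmap : Measurable fun (ω : s.map σ.toEmbedding → α) (i : s) =>
      ω ⟨σ i, Finset.mem_map_of_mem _ i.2⟩ :=
    measurable_pi_lambda _ fun i => measurable_pi_apply _
  have hinter := hindep.measure_inter_preimage_eq_mul S _ hS (hmap hS)
  have hinv := (measurePreserving_comp_infinitePi ν σ).measure_preimage
    (hS.cylinder (α := fun _ : ι => α) s).nullMeasurableSet
  exact hinter.trans ((congrArg _ hinv).trans (sq _).symm)

open scoped symmDiff in
lemma abs_measureReal_sub_sq_le (hE : MeasurableSet E) {σ : Equiv.Perm ι}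
    (hσE : (· ∘ σ) ⁻¹' E = E) {s : Finset ι} {S : Set (s → α)} (hS : MeasurableSet S)
    (hσ : Disjoint s (s.map σ.toEmbedding)) {ε : ℝ}
    (hε : (Measure.infinitePi fun _ => ν).real (cylinder s S ∆ E) ≤ ε) :
    |(Measure.infinitePi fun _ => ν).real E - (Measure.infinitePi fun _ => ν).real E ^ 2| ≤
      4 * ε := by
  set μ := Measure.infinitePi fun _ : ι => ν
  set C : Set (ι → α) := cylinder s S
  have hC : MeasurableSet C := hS.cylinder s
  have hmp := measurePreserving_comp_infinitePi ν σ
  have hsq : μ.real (C ∩ (· ∘ σ) ⁻¹' C) = μ.real C ^ 2 := by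
    rw [measureReal_def, infinitePi_cylinder_inter_preimage_comp ν hS hσ, ENNReal.toReal_pow]
    rfl
  have hshift : μ.real (((· ∘ σ) ⁻¹' C) ∆ E) ≤ ε := by
    have hpre : ((· ∘ σ) ⁻¹' C) ∆ E = (· ∘ σ) ⁻¹' (C ∆ E) := by
      rw [Set.preimage_symmDiff, hσE]
    rwa [hpre, measureReal_def, hmp.measure_preimage (hC.symmDiff hE).nullMeasurableSet]
  have hEC : |μ.real C - μ.real E| ≤ ε :=
    (abs_measureReal_sub_le_measureReal_symmDiff hC.nullMeasurableSet hE.nullMeasurableSet).trans hε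
  have hEC2 : |μ.real C ^ 2 - μ.real E| ≤ ε + ε := by
    rw [← hsq]
    refine (abs_measureReal_sub_le_measureReal_symmDiff
      (hC.inter (hmp.measurable hC)).nullMeasurableSet hE.nullMeasurableSet).trans ?_
    refine (measureReal_mono fun ω hω => ?_).trans
      ((measureReal_union_le _ _).trans (add_le_add hε hshift))
    simp only [Set.mem_symmDiff, Set.mem_inter_iff, Set.mem_union] at hω ⊢
    tauto
  have hε0 : 0 ≤ ε := measureReal_nonneg.trans hε
  have hsum : |μ.real C + μ.real E| ≤ 2 := by
    rw [abs_of_nonneg (add_nonneg measureReal_nonneg measureReal_nonneg)]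
    linarith [measureReal_le_one (μ := μ) (s := C), measureReal_le_one (μ := μ) (s := E)]
  calc |μ.real E - μ.real E ^ 2|
      = |(μ.real C - μ.real E) * (μ.real C + μ.real E) - (μ.real C ^ 2 - μ.real E)| := by ring_nf
    _ ≤ |μ.real C - μ.real E| * |μ.real C + μ.real E| + |μ.real C ^ 2 - μ.real E| :=
        (abs_sub _ _).trans_eq (by rw [abs_mul])
    _ ≤ ε * 2 + (ε + ε) := by gcongr
    _ = 4 * ε := by ring

-- Approximate `E` by a cylinder and move its base off itself: `E` becomes independent of itself.
lemma infinitePi_eq_zero_or_compl_eq_zero_of_invariant (hE : MeasurableSet E)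
    (hinv : ∀ s : Finset ι, ∃ σ : Equiv.Perm ι,
      Disjoint s (s.map σ.toEmbedding) ∧ (· ∘ σ) ⁻¹' E = E) :
    (Measure.infinitePi fun _ => ν) E = 0 ∨ (Measure.infinitePi fun _ => ν) Eᶜ = 0 := by
  set μ := Measure.infinitePi fun _ : ι => ν
  have hclose : ∀ ε : ℝ, 0 < ε → |μ.real E - μ.real E ^ 2| ≤ 4 * ε := by
    intro ε hε
    obtain ⟨t, ht, htE⟩ := exists_measure_symmDiff_lt_of_generateFrom_isSetRing (μ := μ)
      isSetRing_measurableCylinders ⟨{Set.univ}, Set.countable_singleton _,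
        Set.singleton_subset_iff.2 (univ_mem_measurableCylinders _), by simp⟩
      generateFrom_measurableCylinders.symm hE (ENNReal.ofReal_pos.2 hε)
    obtain ⟨s, S, hS, rfl⟩ := (mem_measurableCylinders t).1 ht
    obtain ⟨σ, hσ, hσE⟩ := hinv s
    exact abs_measureReal_sub_sq_le ν hE hσE hS hσ
      (ENNReal.toReal_le_of_le_ofReal hε.le htE.le)
  have hidem : μ.real E * (1 - μ.real E) = 0 := by
    refine abs_nonpos_iff.1 (le_of_forall_pos_le_add fun ε hε => ?_)
    rw [mul_one_sub, ← sq, zero_add]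
    exact (hclose (ε / 4) (by positivity)).trans_eq (mul_div_cancel₀ ε four_ne_zero)
  rw [← measureReal_eq_zero_iff, ← measureReal_eq_zero_iff, probReal_compl_eq_one_sub hE]
  exact mul_eq_zero.1 hidem

end ProductMeasure

section Bernoulli

variable {ι : Type*} {d : ℕ} {p : unitInterval} {P : Measure (Config d)}

lemma bernoulliMeasure_real_singleton (a : Bool) :
    Ber(true, false, p).real {a} = if a then (p : ℝ) else 1 - p := by
  cases a <;> simp

lemma measureReal_infinitePi_bernoulli_restrict_mem [DecidableEq ι] (s : Finset ι)
    (A : Set (s → Bool)) :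
    (Measure.infinitePi fun _ : ι => Ber(true, false, p)).real {ω | s.restrict ω ∈ A} =
      ∑ η, bernoulliWeight p η * A.indicator 1 η := by
  have hA : MeasurableSet A := A.toFinite.measurableSet
  change (Measure.infinitePi fun _ : ι => Ber(true, false, p)).real (s.restrict ⁻¹' A) = _
  rw [← map_measureReal_apply (by fun_prop) hA, Measure.infinitePi_map_restrict,
    ← integral_indicator_one hA, integral_fintype .of_finite]
  refine Finset.sum_congr rfl fun η _ => congrArg (· * A.indicator 1 η) ?_
  rw [measureReal_def, Measure.pi_singleton, ENNReal.toReal_prod]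
  exact Finset.prod_congr rfl fun b _ => bernoulliMeasure_real_singleton (η b)

lemma sum_measureReal_mem_restrict [DecidableEq ι] (s : Finset ι)
    (S : (s → Bool) → Finset s) :
    ∑ b, (Measure.infinitePi fun _ : ι => Ber(true, false, p)).real {ω | b ∈ S (s.restrict ω)} =
      ∑ η, bernoulliWeight p η * (S η).card := by
  have hbond : ∀ b, (Measure.infinitePi fun _ : ι => Ber(true, false, p)).real
      {ω | b ∈ S (s.restrict ω)} = ∑ η, bernoulliWeight p η * {η | b ∈ S η}.indicator 1 η :=
    fun b => measureReal_infinitePi_bernoulli_restrict_mem s {η | b ∈ S η}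
  simp only [hbond, Set.indicator_apply, Set.mem_ofPred_eq, Pi.one_apply]
  rw [Finset.sum_comm]
  simp only [← Finset.mul_sum, Finset.sum_boole, Finset.filter_mem_eq_inter, Finset.univ_inter]

/-- Bernoulli bond percolation on `ℤ^d` with parameter `p`. -/
abbrev bernoulliPercolation (d : ℕ) (p : unitInterval) : Measure (Config d) :=
  Measure.infinitePi fun _ => Ber(true, false, p)

lemma IsBernoulli.eq_bernoulliPercolation (hP : IsBernoulli d p P) :
    P = bernoulliPercolation d p := by
  have := hP.1
  refine IsProjectiveLimit.unique (fun s => Measure.ext_of_singleton fun η => ?_)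
    (Measure.isProjectiveLimit_infinitePi _)
  have hpreimage : (fun ω : Config d => s.restrict ω) ⁻¹' {η} =
      {ω : Config d | ∀ b ∈ s, ω b = if hb : b ∈ s then η ⟨b, hb⟩ else false} := by
    ext ω
    simp only [Set.mem_preimage, Set.mem_singleton_iff, funext_iff, Subtype.forall,
      Finset.restrict_def, Set.mem_ofPred_eq]
    exact forall₂_congr fun b hb => by rw [dif_pos hb]
  rw [Measure.map_apply (by fun_prop) (measurableSet_singleton η), hpreimage, hP.2,
    Measure.pi_singleton, ← Finset.prod_coe_sort]
  refine Finset.prod_congr rfl fun b _ => ?_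
  rw [dif_pos b.2, ← bernoulliMeasure_real_singleton, ofReal_measureReal]

lemma measurePreserving_shift (x : V d) :
    MeasurePreserving (shift x) (bernoulliPercolation d p) (bernoulliPercolation d p) :=
  measurePreserving_comp_infinitePi _ ((Equiv.addRight x).prodCongr (Equiv.refl _))

lemma exists_disjoint_map_addRight [NeZero d] (s : Finset (EdgeIx d)) : ∃ x : V d,
    Disjoint s (s.map ((Equiv.addRight x).prodCongr (Equiv.refl (Fin d))).toEmbedding) := by
  classical
  obtain ⟨x, hx⟩ := Infinite.exists_notMem_finset
    (Finset.image₂ (fun b c : EdgeIx d => b.1 - c.1) s s)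
  refine ⟨x, Finset.disjoint_right.2 fun b hb hbs => hx ?_⟩
  obtain ⟨c, hc, rfl⟩ := Finset.mem_map.1 hb
  exact Finset.mem_image₂.2 ⟨_, hbs, c, hc, add_sub_cancel_left _ _⟩

end Bernoulli

section Box

variable {d n : ℕ} {ω : Config d} {x y : V d} {b : EdgeIx d}

/-- The vertices of the box `[0, n]^d`. -/
def box (d n : ℕ) : Finset (V d) := Fintype.piFinset fun _ => Finset.Icc 0 (n : ℤ)

/-- The inner boundary of the box `[0, n]^d`. -/
def boxBoundary (d n : ℕ) : Finset (V d) :=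
  box d n \ Fintype.piFinset fun _ => Finset.Ioo 0 (n : ℤ)

/-- The bonds `{x, x + eᵢ}` with `x ∈ [0, n)^d`, so that translation invariance counts each
direction exactly `n ^ d` times. -/
def boxBonds (d n : ℕ) : Finset (EdgeIx d) :=
  (Fintype.piFinset fun _ => Finset.Ico 0 (n : ℤ)) ×ˢ Finset.univ

/-- The graph formed by the open bonds of the box. -/
abbrev boxGraph (n : ℕ) (ω : Config d) : SimpleGraph (V d) :=
  openGraph (fun b : boxBonds d n => bondEnds b.1) ((boxBonds d n).restrict ω)

lemma boxGraph_le : boxGraph n ω ≤ openLattice ω :=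
  openGraph_comp_le (ends := bondEnds) (Subtype.val : boxBonds d n → EdgeIx d)

lemma card_boxBonds : (boxBonds d n).card = n ^ d * d := by
  simp [boxBonds, Fintype.card_piFinset]

lemma card_boxBoundary (hn : 1 ≤ n) :
    ((boxBoundary d n).card : ℝ) = ((n : ℝ) + 1) ^ d - ((n : ℝ) - 1) ^ d := by
  have hsub : (Fintype.piFinset fun _ => Finset.Ioo 0 (n : ℤ)) ⊆ box d n :=
    Fintype.piFinset_subset _ _ fun _ => Finset.Ioo_subset_Icc_self
  have hIcc : ((n : ℤ) + 1 - 0).toNat = n + 1 := by omega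
  have hIoo : ((n : ℤ) - 0 - 1).toNat = n - 1 := by omega
  rw [boxBoundary, Finset.card_sdiff_of_subset hsub, Nat.cast_sub (Finset.card_le_card hsub)]
  simp only [box, Fintype.card_piFinset, Int.card_Icc, Int.card_Ioo, Finset.prod_const,
    Finset.card_univ, Fintype.card_fin, hIcc, hIoo]
  push_cast [hn]
  rfl

lemma mem_boxBonds : b ∈ boxBonds d n ↔ ∀ j, 0 ≤ b.1 j ∧ b.1 j < n := by
  simp only [boxBonds, Finset.mem_product, Fintype.mem_piFinset, Finset.mem_Ico, Finset.mem_univ,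
    and_true]

lemma mem_box_of_mem_bondEnds (hb : b ∈ boxBonds d n) (hy : y ∈ bondEnds b) : y ∈ box d n := by
  simp only [box, Fintype.mem_piFinset, Finset.mem_Icc]
  intro j
  have hj := mem_boxBonds.1 hb j
  obtain rfl | rfl := Sym2.mem_iff.1 hy
  · omega
  · simp only [Pi.add_apply, unitVec]
    split_ifs <;> omega

lemma mem_boxBonds_of_mem_bondEnds (hy : y ∈ box d n) (hyb : y ∉ boxBoundary d n)
    (hb : y ∈ bondEnds b) : b ∈ boxBonds d n := by
  rw [mem_boxBonds]
  intro j
  have hj : 0 < y j ∧ y j < n := by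
    simp only [boxBoundary, Finset.mem_sdiff, not_and_not_right, Fintype.mem_piFinset,
      Finset.mem_Ioo] at hyb
    exact hyb hy j
  obtain rfl | rfl := Sym2.mem_iff.1 hb
  · omega
  · simp only [Pi.add_apply, unitVec] at hj
    split_ifs at hj <;> omega

lemma exists_mem_boxBoundary_reachable (hx : x ∈ box d n)
    (hinf : InInfiniteCluster (openLattice ω) x) :
    ∃ w ∈ boxBoundary d n, (boxGraph n ω).Reachable w x := by
  by_contra! hcon
  suffices hstay : ∀ y, (openLattice ω).Reachable x y →
      (boxGraph n ω).Reachable x y ∧ y ∈ box d n from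
    hinf ((box d n).finite_toSet.subset fun y hy => (hstay y hy).2)
  intro y hxy
  rw [SimpleGraph.reachable_iff_reflTransGen] at hxy
  induction hxy with
  | refl => exact ⟨.rfl, hx⟩
  | @tail y z _ hyz ih =>
    obtain ⟨hxy', hy⟩ := ih
    obtain ⟨⟨b, hb, hends⟩, -⟩ := openGraph_adj.1 hyz
    have hyb : y ∈ bondEnds b := hends ▸ Sym2.mem_mk_left y z
    have hzb : z ∈ bondEnds b := hends ▸ Sym2.mem_mk_right y z
    have hbox := mem_boxBonds_of_mem_bondEnds hy (fun h => hcon y h hxy'.symm) hyb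
    exact ⟨hxy'.trans (reachable_of_open (b := ⟨b, hbox⟩) hb hyb hzb),
      mem_box_of_mem_bondEnds hbox hzb⟩

/-- The configurations in which `x` and `y` lie in distinct infinite clusters. -/
def distinctInfiniteClusters (x y : V d) : Set (Config d) :=
  {ω | InInfiniteCluster (openLattice ω) x ∧ InInfiniteCluster (openLattice ω) y ∧
    ¬ (openLattice ω).Reachable x y}

lemma distinctInfiniteClusters_comm (x y : V d) :
    distinctInfiniteClusters x y = distinctInfiniteClusters y x := by
  ext ω
  simp only [distinctInfiniteClusters, Set.mem_ofPred_eq, SimpleGraph.reachable_comm (u := x)]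
  tauto

lemma measurableSet_distinctInfiniteClusters (x y : V d) :
    MeasurableSet (distinctInfiniteClusters x y) :=
  (measurableSet_inInfiniteCluster bondEnds x).inter
    ((measurableSet_inInfiniteCluster bondEnds y).inter
      (measurableSet_openGraph_reachable bondEnds x y).compl)

lemma shift_preimage_distinctInfiniteClusters (v x y : V d) :
    shift v ⁻¹' distinctInfiniteClusters x y = distinctInfiniteClusters (x + v) (y + v) := by
  ext ω
  simp only [distinctInfiniteClusters, Set.mem_preimage, Set.mem_ofPred_eq,
    ← inInfiniteCluster_iso_iff (shiftIso v ω), ← (shiftIso v ω).reachable_iff]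
  rfl

lemma mem_bridging_of_mem_distinctInfiniteClusters (b : boxBonds d n)
    (h : ω ∈ distinctInfiniteClusters b.1.1 (b.1.1 + unitVec d b.1.2)) :
    b ∈ bridging (fun b : boxBonds d n => bondEnds b.1) (boxBoundary d n)
      ((boxBonds d n).restrict ω) := by
  obtain ⟨hinf, hinf', hdisj⟩ := h
  have hleft : b.1.1 ∈ bondEnds b.1 := Sym2.mem_mk_left _ _
  have hright : b.1.1 + unitVec d b.1.2 ∈ bondEnds b.1 := Sym2.mem_mk_right _ _
  obtain ⟨w, hw, hwx⟩ :=
    exists_mem_boxBoundary_reachable (mem_box_of_mem_bondEnds b.2 hleft) hinf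
  obtain ⟨w', hw', hwy⟩ :=
    exists_mem_boxBoundary_reachable (mem_box_of_mem_bondEnds b.2 hright) hinf'
  exact mem_bridging.2 (Finset.one_lt_card.2 ⟨_, mk_mem_incidentClusters hw hleft hwx, _,
    mk_mem_incidentClusters hw' hright hwy,
    fun h => hdisj ((SimpleGraph.ConnectedComponent.eq.1 h).mono boxGraph_le)⟩)

end Box

section Uniqueness

variable {d n : ℕ} {p : unitInterval} {δ : ℝ}

lemma measure_distinctInfiniteClusters_add (v x y : V d) :
    bernoulliPercolation d p (distinctInfiniteClusters (x + v) (y + v)) =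
      bernoulliPercolation d p (distinctInfiniteClusters x y) := by
  rw [← shift_preimage_distinctInfiniteClusters]
  exact (measurePreserving_shift v).measure_preimage
    (measurableSet_distinctInfiniteClusters x y).nullMeasurableSet

lemma pow_mul_sum_distinctInfiniteClusters_le :
    n ^ d * ∑ i, (bernoulliPercolation d p).real (distinctInfiniteClusters 0 (unitVec d i)) ≤
      ∑ η, bernoulliWeight p η *
        (bridging (fun b : boxBonds d n => bondEnds b.1) (boxBoundary d n) η).card := by
  have htranslate : ∀ b : EdgeIx d, (bernoulliPercolation d p).real
      (distinctInfiniteClusters b.1 (b.1 + unitVec d b.2)) =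
        (bernoulliPercolation d p).real (distinctInfiniteClusters 0 (unitVec d b.2)) := fun b => by
    rw [measureReal_def, measureReal_def, ← measure_distinctInfiniteClusters_add b.1 0, zero_add,
      add_comm b.1]
  calc n ^ d * ∑ i, (bernoulliPercolation d p).real (distinctInfiniteClusters 0 (unitVec d i))
      = ∑ b ∈ boxBonds d n, (bernoulliPercolation d p).real
          (distinctInfiniteClusters b.1 (b.1 + unitVec d b.2)) := by
        simp only [htranslate, boxBonds, Finset.sum_product]
        simp [Fintype.card_piFinset]
    _ = ∑ b : boxBonds d n, (bernoulliPercolation d p).real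
          (distinctInfiniteClusters b.1.1 (b.1.1 + unitVec d b.1.2)) :=
        (Finset.sum_coe_sort _ _).symm
    _ ≤ _ := by
        rw [← sum_measureReal_mem_restrict]
        exact Finset.sum_le_sum fun b _ =>
          measureReal_mono fun ω => mem_bridging_of_mem_distinctInfiniteClusters b

lemma mul_sum_distinctInfiniteClusters_le_add (hn : 1 ≤ n) (hδ0 : 0 ≤ δ) (hδ : δ ≤ 1 / 2) :
    δ * p * ∑ i, (bernoulliPercolation d p).real (distinctInfiniteClusters 0 (unitVec d i)) ≤
      6 * δ ^ 2 * d + ((1 + (n : ℝ)⁻¹) ^ d - (1 - (n : ℝ)⁻¹) ^ d) + (n : ℝ)⁻¹ ^ d := by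
  have hn0 : (n : ℝ) ≠ 0 := by positivity
  have hscale : ∀ t : ℝ, (n : ℝ) ^ d * t ^ d = (n * t) ^ d := fun t => (mul_pow _ _ _).symm
  have hbox := (mul_le_mul_of_nonneg_left pow_mul_sum_distinctInfiniteClusters_le
    (mul_nonneg hδ0 p.2.1)).trans (mul_sum_bernoulliWeight_mul_card_bridging_le p.2.1 p.2.2 hδ0 hδ
      (ends := fun b : boxBonds d n => bondEnds b.1) (boxBoundary d n))
  rw [Fintype.card_coe, card_boxBonds, card_boxBoundary hn] at hbox
  refine le_of_mul_le_mul_left ?_ (pow_pos (Nat.cast_pos.2 hn : (0 : ℝ) < n) d)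
  calc _ = _ := mul_left_comm _ _ _
    _ ≤ _ := hbox
    _ = _ := by
      simp only [mul_add, mul_sub, hscale, mul_one, mul_inv_cancel₀ hn0, one_pow]
      push_cast
      ring

lemma mul_sum_distinctInfiniteClusters_le (hd : d ≠ 0) (hδ0 : 0 ≤ δ) (hδ : δ ≤ 1 / 2) :
    δ * p * ∑ i, (bernoulliPercolation d p).real (distinctInfiniteClusters 0 (unitVec d i)) ≤
      6 * δ ^ 2 * d := by
  have hinv : Tendsto (fun n : ℕ => (n : ℝ)⁻¹) atTop (𝓝 0) := tendsto_inv_atTop_nhds_zero_nat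
  have hlim : Tendsto (fun n : ℕ => 6 * δ ^ 2 * d + ((1 + (n : ℝ)⁻¹) ^ d - (1 - (n : ℝ)⁻¹) ^ d) +
      (n : ℝ)⁻¹ ^ d) atTop (𝓝 (6 * δ ^ 2 * d + ((1 + 0) ^ d - (1 - 0) ^ d) + 0 ^ d)) :=
    (tendsto_const_nhds.add (((hinv.const_add 1).pow d).sub ((hinv.const_sub 1).pow d))).add
      (hinv.pow d)
  rw [add_zero, sub_zero, sub_self, add_zero, zero_pow hd, add_zero] at hlim
  refine ge_of_tendsto hlim ?_
  filter_upwards [eventually_ge_atTop 1] with n hn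
  exact mul_sum_distinctInfiniteClusters_le_add hn hδ0 hδ

lemma measure_distinctInfiniteClusters_unitVec (hp : p ≠ 0) (i : Fin d) :
    bernoulliPercolation d p (distinctInfiniteClusters 0 (unitVec d i)) = 0 := by
  set S := ∑ i, (bernoulliPercolation d p).real (distinctInfiniteClusters 0 (unitVec d i))
  have hlim : Tendsto (fun δ : ℝ => 6 * δ * d) (𝓝[>] 0) (𝓝 (6 * 0 * d)) :=
    ((tendsto_id.const_mul 6).mul_const _).mono_left nhdsWithin_le_nhds
  rw [mul_zero, zero_mul] at hlim
  have hS : p * S ≤ 0 := by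
    refine ge_of_tendsto hlim ?_
    filter_upwards [Ioc_mem_nhdsGT (by norm_num : (0 : ℝ) < 1 / 2)] with δ ⟨hδ0, hδ⟩
    refine le_of_mul_le_mul_left ?_ hδ0
    linarith [mul_sum_distinctInfiniteClusters_le i.pos.ne' hδ0.le hδ (p := p)]
  have hp0 : (0 : ℝ) < p := unitInterval.pos_iff_ne_zero.2 hp
  rw [← measureReal_eq_zero_iff]
  exact (Finset.sum_eq_zero_iff_of_nonneg fun _ _ => measureReal_nonneg).1
    ((nonpos_of_mul_nonpos_right hS hp0).antisymm (Finset.sum_nonneg fun _ _ => measureReal_nonneg))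
    i (Finset.mem_univ i)

lemma measure_distinctInfiniteClusters_bond (hp : p ≠ 0) {b : EdgeIx d} {x y : V d}
    (hb : bondEnds b = s(x, y)) : bernoulliPercolation d p (distinctInfiniteClusters x y) = 0 := by
  have hbond : bernoulliPercolation d p
      (distinctInfiniteClusters b.1 (b.1 + unitVec d b.2)) = 0 := by
    have h := measure_distinctInfiniteClusters_add b.1 0 (unitVec d b.2) (p := p)
    rwa [zero_add, add_comm, measure_distinctInfiniteClusters_unitVec hp] at h
  obtain ⟨rfl, rfl⟩ | ⟨rfl, rfl⟩ := Sym2.eq_iff.1 hb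
  · exact hbond
  · rwa [distinctInfiniteClusters_comm]

-- If `x` lies in a finite cluster, opening the bond `b` joins it to the infinite cluster of `w`.
lemma update_mem_distinctInfiniteClusters {b : EdgeIx d} {w x y : V d} {ω : Config d}
    (hb : bondEnds b = s(w, x)) (h : ω ∈ distinctInfiniteClusters w y)
    (hx : ¬ InInfiniteCluster (openLattice ω) x) :
    Function.update ω b true ∈ distinctInfiniteClusters x y := by
  obtain ⟨hw, hy, hwy⟩ := h
  have hle : openLattice ω ≤ openLattice (Function.update ω b true) :=
    openGraph_mono fun c hc => by
      rcases eq_or_ne c b with rfl | hcb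
      · exact Function.update_self ..
      · rwa [Function.update_of_ne hcb]
  have hwx : (openLattice (Function.update ω b true)).Reachable w x :=
    reachable_of_open (Function.update_self ..) (hb ▸ Sym2.mem_mk_left w x)
      (hb ▸ Sym2.mem_mk_right w x)
  refine ⟨(hw.mono hle).of_reachable hwx, hy.mono hle, fun hxy => ?_⟩
  rcases reachable_of_reachable_update_true hb hxy with h | h
  · exact hwy h
  · exact hx (hy.of_reachable h.symm)

lemma measure_distinctInfiniteClusters_of_bond (hp : p ≠ 0) {b : EdgeIx d} {w x y : V d}
    (hb : bondEnds b = s(w, x)) (h : bernoulliPercolation d p (distinctInfiniteClusters x y) = 0) :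
    bernoulliPercolation d p (distinctInfiniteClusters w y) = 0 := by
  have hopen : Ber(true, false, p) {true} ≠ 0 :=
    (measureReal_ne_zero_iff).1 (by simpa [bernoulliMeasure_real_singleton] using hp)
  have hinsert := infinitePi_preimage_update_eq_zero (j := b)
    (μ := fun _ => Ber(true, false, p)) hopen h
  refine measure_mono_null ?_ (measure_union_null
    (measure_distinctInfiniteClusters_bond hp hb) (measure_union_null h hinsert))
  intro ω hω
  by_cases hx : InInfiniteCluster (openLattice ω) x
  · by_cases hwx : (openLattice ω).Reachable w x
    · exact .inr (.inl ⟨hx, hω.2.1, fun hxy => hω.2.2 (hwx.trans hxy)⟩)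
    · exact .inl ⟨hω.1, hx, hwx⟩
  · exact .inr (.inr (update_mem_distinctInfiniteClusters hb hω hx))

lemma measure_distinctInfiniteClusters (hp : p ≠ 0) (x y : V d) :
    bernoulliPercolation d p (distinctInfiniteClusters x y) = 0 := by
  have hmove : ∀ v, ∀ z, bernoulliPercolation d p (distinctInfiniteClusters z y) = 0 ↔
      bernoulliPercolation d p (distinctInfiniteClusters (z + v) y) = 0 := by
    intro v
    induction (closure_range_unitVec (d := d) ▸ AddSubgroup.mem_top v :
      v ∈ AddSubgroup.closure (Set.range (unitVec d))) using AddSubgroup.closure_induction with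
    | mem _ hv =>
      obtain ⟨i, rfl⟩ := hv
      exact fun z => ⟨measure_distinctInfiniteClusters_of_bond hp (b := (z, i)) Sym2.eq_swap,
        measure_distinctInfiniteClusters_of_bond hp (b := (z, i)) rfl⟩
    | zero => simp
    | add v w _ _ hv hw => exact fun z => by rw [← add_assoc, hv z, hw (z + v)]
    | neg v _ hv => exact fun z => by rw [hv (z + -v), neg_add_cancel_right]
  have hself : distinctInfiniteClusters y y = ∅ :=
    Set.eq_empty_of_forall_notMem fun ω hω => hω.2.2 .rfl
  rw [← add_sub_cancel y x, ← hmove, hself, measure_empty]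

end Uniqueness

theorem isErgodicPercolation_bernoulliPercolation {d : ℕ} [NeZero d] {p : unitInterval}
    (hp : p ≠ 0) : IsErgodicPercolation (bernoulliPercolation d p) where
  measurePreserving_shift := measurePreserving_shift
  eq_zero_or_compl_eq_zero _ hE hinv :=
    infinitePi_eq_zero_or_compl_eq_zero_of_invariant _ hE fun s =>
      (exists_disjoint_map_addRight s).elim fun x hx => ⟨_, hx, hinv x⟩
  ae_reachable := ae_all_iff.2 fun x => ae_all_iff.2 fun y => by
    filter_upwards [measure_eq_zero_iff_ae_notMem.1 (measure_distinctInfiniteClusters hp x y)]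
      with ω hω hx hy
    exact not_not.1 fun hxy => hω ⟨hx, hy, hxy⟩

theorem environment_chain_ergodic_general {d : ℕ} {P : Measure (Config d)} [IsFiniteMeasure P]
    (hP : IsErgodicPercolation P) {κ : Config d → Step d → ℝ} (hκ : κ ∈ PiT d (P[|cluZero d]))
    {Q : Measure (Config d)} [IsProbabilityMeasure Q] (hQac : Q ≪ (P[|cluZero d]))
    (hQinv : IsInvariant κ Q) :
    (P[|cluZero d]) ≪ Q ∧
    (∀ D : Set (Config d), MeasurableSet D →
      kernelStep κ (D.indicator 1) =ᵐ[Q] D.indicator 1 → Q D = 0 ∨ Q D = 1) ∧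
    (∀ Q' : Measure (Config d), IsProbabilityMeasure Q' → Q' ≪ (P[|cluZero d]) →
      IsInvariant κ Q' → Q' = Q) := by
  have hK := hP.isIndecomposable_envKernel hκ
  have hκ0 := hκ.2.1
  have hκ1 := hκ.2.2.2.1
  have hinv : ∀ {R : Measure (Config d)} [IsProbabilityMeasure R], R ≪ P[|cluZero d] →
      IsInvariant κ R → Kernel.Invariant (envKernel κ hκ.1) R := fun hR hRinv =>
    hRinv.invariant_envKernel hκ0 (hR.ae_le hκ1)
  have hPQ := hK.absolutelyContinuous_of_invariant (IsProbabilityMeasure.ne_zero Q) hQac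
    (hinv hQac hQinv)
  refine ⟨hPQ, fun D hD hstep => ?_, fun Q' _ hQ'ac hQ'inv => ?_⟩
  · refine hK.measure_eq_zero_or_one hQac hPQ hD ?_
    filter_upwards [hstep, hQac.ae_le hκ1] with ω hω hω1 hωD
    exact envKernel_compl_eq_zero (hκ0 ω) hω1 hD (by rw [hω, Set.indicator_of_mem hωD]; rfl)
  · have hmass : ∀ᵐ ω ∂P[|cluZero d], envKernel κ hκ.1 ω Set.univ = 1 := by
      filter_upwards [hκ1] with ω hω
      exact (isProbabilityMeasure_envKernel (hκ0 ω) hω).measure_univ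
    exact hK.eq_of_invariant hmass hQ'ac hQac (hinv hQ'ac hQ'inv) (hinv hQac hQinv)

end SRWPC

open SRWPC in
/-- **Ergodicity and uniqueness of absolutely continuous invariant measures for the
environment chain** (Theorem 3.2). -/
theorem environment_chain_ergodic
    (d : ℕ) (hd : 2 ≤ d) (p : ℝ) (hp0 : 0 < p) (hp1 : p < 1) (hpc : pc d < p)
    (P : Measure (Config d)) (hP : IsBernoulli d p P)
    (κ : Config d → Step d → ℝ) (hκ : κ ∈ PiT d (P[|cluZero d]))
    (Q : Measure (Config d)) (hQprob : IsProbabilityMeasure Q)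
    (hQac : Q ≪ (P[|cluZero d])) (hQinv : IsInvariant κ Q) :
    (P[|cluZero d]) ≪ Q ∧
    (∀ D : Set (Config d), MeasurableSet D →
      kernelStep κ (D.indicator 1) =ᵐ[Q] D.indicator 1 → Q D = 0 ∨ Q D = 1) ∧
    (∀ Q' : Measure (Config d), IsProbabilityMeasure Q' → Q' ≪ (P[|cluZero d]) →
      IsInvariant κ Q' → Q' = Q) := by
  have : NeZero d := ⟨by lia⟩
  obtain rfl := IsBernoulli.eq_bernoulliPercolation (p := ⟨p, hp0.le, hp1.le⟩) hP
  exact environment_chain_ergodic_general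
    (isErgodicPercolation_bernoulliPercolation (Subtype.coe_ne_coe.1 hp0.ne')) hκ hQac hQinv
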